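/- arXiv:1512.09174 — 3 statements merged into one kernel-verified Lean document; each statement's English description precedes it below -/
import Mathlib

section
/- Suppose f satisfies (H) and (H') with constants μ, β, σ > 0, and β < σ/(2 + μ/σ). Let γ > 0 satisfy γ + β/σ < 1 and β ≤ (σ - (σ+μ)γ)/(2 + μ/σ). Then the equation x'(t) = f(x(t-1)) has an SOP solution p possessing a zero z such that the segment s ↦ p(z + 1 + s), s ∈ [-1,0], belongs to K (with M = μ) and satisfies p(z + 1 + s) > σs + σ(1-γ) for all s ∈ [-1+γ, -β/σ]. -/
/-!
A slowly oscillating periodic solution is a positive hump `u` on `[0, z]` followed by a negative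
hump `-v` of length `w`, repeated with period `z + w`.  On the first unit of time each hump is
driven by the final part of the other one, afterwards by its own past.  With `b = β / σ` the
hypothesis on `β` becomes `(2 σ + μ) b ≤ σ`.

Humps are described by a closed convex condition: their increments lie between those of a slowest
and a fastest piecewise linear profile.  Hence a hump rises with speed at least `σ` up to time
`1 - b`, is still at least `σ (1 - b) - μ b ≥ σ b` at time `1 + b`, and falls with speed at least
`σ` afterwards.  So it is at least `β` except during a time `b` at either end, and its zero depends
continuously on it because zero is crossed with speed at least `σ`.  Given a pair of humps, both are
replaced by the primitives of the slopes that the delay equation prescribes, where the hump's own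
past `v t` is raised to `σ min(b, t)` if necessary.  Since `σ ≤ |f| ≤ μ` at distance at least `β`
from zero, the new functions are humps again.  This map is continuous for uniform convergence, and
the set of humps on `[0, L]` is compact and convex, so Schauder's theorem gives a fixed pair.  At a
fixed pair the cut-off is inactive up to the zeros, so the two humps solve the delay equation and
concatenate to a periodic solution.  The segment following an upward zero is the beginning of a
hump, so it satisfies `σ (s + 1) ≤ p (z + 1 + s)`, which is stronger than the claim.

Schauder's theorem is deduced from Brouwer's by projecting onto the convex hulls of finite
`ε`-nets, and Brouwer's theorem from the no-retraction theorem, proved by the volume argument of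
Milnor and Rogers: the volume of the image of the ball under `x ↦ x + t v x` is polynomial in `t`.
-/

open Set Filter

/-- Hypotheses (H): `f` is continuous, satisfies the negative feedback condition,
and is differentiable on a neighborhood of `0` with `f'(0) < 0`. -/
def HypH (f : ℝ → ℝ) : Prop :=
  Continuous f ∧ (∀ x : ℝ, x ≠ 0 → x * f x < 0) ∧
    (∀ᶠ y in nhds (0 : ℝ), DifferentiableAt ℝ f y) ∧ deriv f 0 < 0

/-- A solution on `[-1,∞)` of the delay equation `x'(t) = f (x (t-1))`. -/
def IsSolOn (f x : ℝ → ℝ) : Prop :=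
  ContinuousOn x (Ici (-1)) ∧ ∀ t : ℝ, 0 < t → HasDerivAt x (f (x (t - 1))) t

/-- Membership in the set `K`: `φ(-1) = 0`, `φ` nondecreasing on `[-1,0]`,
continuous there, and `|φ| ≤ M`. -/
def MemK (M : ℝ) (φ : ℝ → ℝ) : Prop :=
  ContinuousOn φ (Icc (-1) 0) ∧ φ (-1) = 0 ∧ MonotoneOn φ (Icc (-1) 0) ∧
    ∀ s ∈ Icc (-1 : ℝ) 0, |φ s| ≤ M

/-- `T` is the minimal (positive) period of `p`. -/
def MinPeriod {α : Type*} (p : ℝ → α) (T : ℝ) : Prop :=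
  0 < T ∧ (∀ t, p (t + T) = p t) ∧
    ∀ T' : ℝ, 0 < T' → (∀ t, p (t + T') = p t) → T ≤ T'

/-- A slowly oscillating periodic (SOP) solution of `x'(t) = f (x (t-1))`:
a nonconstant periodic differentiable solution any two of whose distinct
zeros are separated by more than `1`. -/
def IsSOP (f p : ℝ → ℝ) : Prop :=
  (∀ t : ℝ, HasDerivAt p (f (p (t - 1))) t) ∧
    (∃ T : ℝ, 0 < T ∧ ∀ t, p (t + T) = p t) ∧
    (∃ t s : ℝ, p t ≠ p s) ∧
    ∀ z z' : ℝ, p z = 0 → p z' = 0 → z ≠ z' → 1 < |z - z'|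

/-- A Kaplan–Yorke solution: an SOP solution of minimal period `4`
satisfying `x(t) = -x(t-2)`. -/
def IsKY (f x : ℝ → ℝ) : Prop :=
  IsSOP f x ∧ MinPeriod x 4 ∧ ∀ t : ℝ, x t = -x (t - 2)

/-- Hypotheses (H') with constants `μ, β, σ`. -/
def HypH' (f : ℝ → ℝ) (μ β σ : ℝ) : Prop :=
  (∀ x : ℝ, |f x| ≤ μ) ∧ ∀ x : ℝ, β ≤ |x| → σ ≤ |f x|

/-- Hypotheses (H'') with constants `a, c, δ, γ`. -/
def HypH'' (f : ℝ → ℝ) (a c δ γ : ℝ) : Prop :=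
  (∀ x : ℝ, f (-x) = -f x) ∧ (∀ x ∈ Icc (0 : ℝ) (2 * a), |f x| ≤ γ) ∧
    (∀ x ∈ Icc a (2 * a - c), f x = -γ) ∧ ∀ x ∈ Icc (2 * a) γ, f x = -δ

/-- The minimal period of `p` equals `z'' - z` for three consecutive zeros
`z < z' < z''` of `p`. -/
def PeriodThreeZeros (p : ℝ → ℝ) : Prop :=
  ∃ z z' z'' : ℝ, z < z' ∧ z' < z'' ∧ p z = 0 ∧ p z' = 0 ∧ p z'' = 0 ∧
    (∀ t, t ∈ Ioo z z' ∪ Ioo z' z'' → p t ≠ 0) ∧ MinPeriod p (z'' - z)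

section Displacement

open MeasureTheory Polynomial Module

lemma exists_eval_eq_sum_eval {F : Type*} [Field F] (s : Finset F) (a : F) :
    ∃ c : F → F, ∀ P : F[X], P.degree < s.card → P.eval a = ∑ x ∈ s, c x * P.eval x := by
  classical
  refine ⟨fun x => (Lagrange.basis s id x).eval a, fun P hP => ?_⟩
  conv_lhs => rw [Lagrange.eq_interpolate (v := id) (Set.injOn_id _) hP,
    Lagrange.interpolate_apply, eval_finsetSum]
  simp only [id_eq, eval_mul, eval_C, mul_comm]

lemma exists_eval_eq_det_id_add_smul {F V : Type*} [Field F] [AddCommGroup V] [Module F V]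
    [FiniteDimensional F V] (A : V →ₗ[F] V) :
    ∃ P : F[X], P.natDegree ≤ finrank F V ∧
      ∀ t : F, P.eval t = LinearMap.det (LinearMap.id + t • A) := by
  let b := finBasis F V
  refine ⟨_, (natDegree_det_X_add_C_le (LinearMap.toMatrix b b A) 1).trans_eq
    (Fintype.card_fin _), fun t => ?_⟩
  rw [← LinearMap.det_toMatrix b, ← coe_evalRingHom, RingHom.map_det]
  congr 1
  ext i j
  simp only [RingHom.mapMatrix_apply, Matrix.map_apply, Matrix.add_apply, Matrix.smul_apply,
    map_add, LinearMap.toMatrix_id, map_smul, Matrix.one_apply, smul_eq_mul, coe_evalRingHom]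
  split_ifs <;> simp [add_comm, mul_comm t]

lemma bijective_add_of_lipschitzWith {E : Type*} [NormedAddCommGroup E] [CompleteSpace E]
    {v : E → E} {K : NNReal} (hv : LipschitzWith K v) (hK : K < 1) :
    Function.Bijective fun x => x + v x := by
  refine ⟨fun x y hxy => ?_, fun y => ?_⟩
  · have hxy : x - y = v y - v x := by
      rw [sub_eq_sub_iff_add_eq_add, add_comm (v y)]; exact hxy
    have hle := hv.norm_sub_le y x
    rw [← hxy, norm_sub_rev y x] at hle
    have hK' : (K : ℝ) < 1 := hK
    exact sub_eq_zero.1 (norm_le_zero_iff.1 (by nlinarith [norm_nonneg (x - y), hK']))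
  · have hc : ContractingWith K fun x => y - v x :=
      ⟨hK, by simpa using (LipschitzWith.const y).sub hv⟩
    exact ⟨_, eq_sub_iff_add_eq.1 hc.fixedPoint_isFixedPt.eq.symm⟩

lemma image_eq_of_bijective_of_eqOn_compl {α : Type*} {F : α → α} {s : Set α}
    (hF : Function.Bijective F) (h : EqOn F id sᶜ) : F '' s = s := by
  rw [← compl_inj_iff, ← image_compl_eq hF, h.image_eq, image_id]

variable {E : Type*} [NormedAddCommGroup E] [NormedSpace ℝ E]

lemma exists_forall_norm_lt_det_id_add_pos :
    ∃ δ > 0, ∀ A : E →L[ℝ] E, ‖A‖ < δ → 0 < (ContinuousLinearMap.id ℝ E + A).det := by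
  have hc : Continuous fun A : E →L[ℝ] E => (ContinuousLinearMap.id ℝ E + A).det :=
    ContinuousLinearMap.continuous_det.comp (continuous_const.add continuous_id)
  have h0 : 0 < (ContinuousLinearMap.id ℝ E + 0).det := by simp [ContinuousLinearMap.det]
  obtain ⟨δ, hδ, h⟩ := Metric.eventually_nhds_iff.1 (hc.continuousAt.eventually (lt_mem_nhds h0))
  exact ⟨δ, hδ, fun A hA => h (by simpa using hA)⟩

variable [FiniteDimensional ℝ E] [MeasurableSpace E] [BorelSpace E] (μ : Measure E)
  [μ.IsAddHaarMeasure] {B : Set E}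

section InjOn

variable {F : E → E} {F' : E → E →L[ℝ] E} (hB : MeasurableSet B)
  (hF : ∀ x ∈ B, HasFDerivWithinAt F (F' x) B x) (hinj : InjOn F B)
  (hdet : ∀ x ∈ B, 0 ≤ (F' x).det)

include hB hF hinj hdet

lemma integrableOn_det_fderiv (hfin : μ (F '' B) ≠ ⊤) :
    IntegrableOn (fun x => (F' x).det) B μ := by
  have h := (integrableOn_image_iff_integrableOn_abs_det_fderiv_smul μ hB hF hinj
    (fun _ => (1 : ℝ))).1 (integrableOn_const hfin)
  exact h.congr_fun (fun x hx => by simp [abs_of_nonneg (hdet x hx)]) hB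

lemma setIntegral_det_fderiv : ∫ x in B, (F' x).det ∂μ = μ.real (F '' B) := by
  have h := integral_image_eq_integral_abs_det_fderiv_smul μ hB hF hinj (fun _ => (1 : ℝ))
  rw [setIntegral_const, smul_eq_mul, mul_one] at h
  rw [h]
  exact setIntegral_congr_fun hB fun x hx => by simp [abs_of_nonneg (hdet x hx)]

end InjOn

variable {v : E → E} {K : NNReal} (hv : LipschitzWith K v) (hv0 : ∀ x ∉ B, v x = 0)
  (hB : MeasurableSet B) (hfin : μ B ≠ ⊤) (hd : ∀ x ∈ B, DifferentiableAt ℝ v x)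

include hv hv0 hB hfin hd

lemma integrableOn_and_setIntegral_det_id_add_fderiv_of_contracting (hK : K < 1)
    (hdet : ∀ x ∈ B, 0 ≤ (ContinuousLinearMap.id ℝ E + fderiv ℝ v x).det) :
    IntegrableOn (fun x => (ContinuousLinearMap.id ℝ E + fderiv ℝ v x).det) B μ ∧
      ∫ x in B, (ContinuousLinearMap.id ℝ E + fderiv ℝ v x).det ∂μ = μ.real B := by
  have hbij := bijective_add_of_lipschitzWith hv hK
  have himage : (fun x => x + v x) '' B = B :=
    image_eq_of_bijective_of_eqOn_compl hbij fun x hx => by simp [hv0 x hx]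
  have hF : ∀ x ∈ B, HasFDerivWithinAt (fun x => x + v x)
      (ContinuousLinearMap.id ℝ E + fderiv ℝ v x) B x := fun x hx =>
    ((hasFDerivAt_id x).add (hd x hx).hasFDerivAt).hasFDerivWithinAt
  have hint := integrableOn_det_fderiv μ hB hF hbij.injective.injOn hdet
  have heq := setIntegral_det_fderiv μ hB hF hbij.injective.injOn hdet
  rw [himage] at hint heq
  exact ⟨hint hfin, heq⟩

lemma exists_integrableOn_and_setIntegral_det_id_add_smul_fderiv :
    ∃ δ > 0, ∀ t ∈ Ioo (0 : ℝ) δ,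
      IntegrableOn (fun x => (ContinuousLinearMap.id ℝ E + t • fderiv ℝ v x).det) B μ ∧
      ∫ x in B, (ContinuousLinearMap.id ℝ E + t • fderiv ℝ v x).det ∂μ = μ.real B := by
  obtain ⟨ε, hε, hpos⟩ := exists_forall_norm_lt_det_id_add_pos (E := E)
  have hK : (0 : ℝ) < K + 1 := by positivity
  refine ⟨min ε 1 / (K + 1), by positivity, fun t ⟨ht0, ht⟩ => ?_⟩
  rw [lt_div_iff₀ hK, lt_min_iff] at ht
  have htv : LipschitzWith (‖t‖₊ * K) fun x => t • v x :=
    (lipschitzWith_smul t).comp hv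
  have hnorm : ((‖t‖₊ * K : NNReal) : ℝ) = t * K := by simp [abs_of_pos ht0]
  have hfd : ∀ x ∈ B, fderiv ℝ (fun x => t • v x) x = t • fderiv ℝ v x := fun x hx =>
    fderiv_fun_const_smul (hd x hx) t
  have hdet : ∀ x ∈ B, 0 ≤ (ContinuousLinearMap.id ℝ E + fderiv ℝ (fun x => t • v x) x).det := by
    refine fun x _ => (hpos _ ?_).le
    refine (norm_fderiv_le_of_lipschitz ℝ htv).trans_lt ?_
    rw [hnorm]; linarith
  obtain ⟨hint, heq⟩ := integrableOn_and_setIntegral_det_id_add_fderiv_of_contracting μ htv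
    (fun x hx => by simp [hv0 x hx]) hB hfin (fun x hx => (hd x hx).const_smul t)
    (by rw [← NNReal.coe_lt_coe, hnorm, NNReal.coe_one]; linarith) hdet
  have hcongr : EqOn (fun x => (ContinuousLinearMap.id ℝ E + fderiv ℝ (fun x => t • v x) x).det)
      (fun x => (ContinuousLinearMap.id ℝ E + t • fderiv ℝ v x).det) B := fun x hx => by
    simp only [hfd x hx]
  exact ⟨hint.congr_fun hcongr hB, setIntegral_congr_fun hB hcongr ▸ heq⟩

-- `det (id + t Dv)` is polynomial in `t`, so the identity extends from small `t` to `t = 1`.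
lemma setIntegral_det_id_add_fderiv :
    ∫ x in B, (ContinuousLinearMap.id ℝ E + fderiv ℝ v x).det ∂μ = μ.real B := by
  obtain ⟨δ, hδ, hsmall⟩ :=
    exists_integrableOn_and_setIntegral_det_id_add_smul_fderiv μ hv hv0 hB hfin hd
  obtain ⟨s, hs, hcard⟩ := (Ioo_infinite hδ).exists_subset_card_eq (finrank ℝ E + 1)
  obtain ⟨c, hc⟩ := exists_eval_eq_sum_eval s 1
  have hsum : ∑ t ∈ s, c t = 1 := by
    simpa using (hc 1 (by rw [degree_one, hcard]; exact_mod_cast Nat.succ_pos _)).symm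
  have hinterp : ∀ A : E →L[ℝ] E, (ContinuousLinearMap.id ℝ E + A).det =
      ∑ t ∈ s, c t * (ContinuousLinearMap.id ℝ E + t • A).det := by
    intro A
    obtain ⟨P, hdeg, hP⟩ := exists_eval_eq_det_id_add_smul (A : E →ₗ[ℝ] E)
    have heval := hc P (degree_le_natDegree.trans_lt (by
      rw [hcard]; exact_mod_cast Nat.lt_succ_of_le hdeg))
    simp only [hP, one_smul] at heval
    exact heval
  calc ∫ x in B, (ContinuousLinearMap.id ℝ E + fderiv ℝ v x).det ∂μ
      = ∫ x in B, ∑ t ∈ s, c t * (ContinuousLinearMap.id ℝ E + t • fderiv ℝ v x).det ∂μ := by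
        simp_rw [← hinterp]
    _ = ∑ t ∈ s, c t * μ.real B := by
        rw [integral_finsetSum _ fun t ht => (hsmall t (hs ht)).1.const_mul (c t)]
        exact Finset.sum_congr rfl fun t ht => by rw [integral_const_mul, (hsmall t (hs ht)).2]
    _ = μ.real B := by rw [← Finset.sum_mul, hsum, one_mul]

end Displacement

section Brouwer

open MeasureTheory Metric InnerProductSpace Topology
open scoped RealInnerProductSpace NNReal

variable {E : Type*} [NormedAddCommGroup E] [InnerProductSpace ℝ E]

lemma det_eq_zero_of_norm_eventually_eq_const [FiniteDimensional ℝ E] {F : E → E} {F' : E →L[ℝ] E}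
    {x : E} {r : ℝ} (hF : HasFDerivAt F F' x) (hr : r ≠ 0) (h : ∀ᶠ y in 𝓝 x, ‖F y‖ = r) :
    F'.det = 0 := by
  by_contra hdet
  have hconst : (fun y => ‖F y‖ ^ 2) =ᶠ[𝓝 x] fun _ => r ^ 2 := h.mono fun y hy => by
    simp only [hy]
  have hderiv := hF.norm_sq.unique ((hasFDerivAt_const (r ^ 2) x).congr_of_eventuallyEq hconst)
  obtain ⟨w, hw⟩ := (LinearMap.equivOfDetNeZero (F' : E →ₗ[ℝ] E) hdet).surjective (F x)
  have hw : F' w = F x := hw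
  have happly := congrArg (fun A : E →L[ℝ] ℝ => A w) hderiv
  simp only [smul_apply, ContinuousLinearMap.comp_apply, hw, innerSL_apply_apply,
    real_inner_self_eq_norm_sq, h.self_of_nhds, zero_apply] at happly
  exact hr (by simpa using happly)

lemma exists_norm_add_ne_of_lipschitzWith [FiniteDimensional ℝ E] {U : Set E} (hU : IsOpen U)
    (hbdd : Bornology.IsBounded U) (hne : U.Nonempty) {v : E → E} {K : ℝ≥0}
    (hv : LipschitzWith K v) (hv0 : ∀ x ∉ U, v x = 0) (hd : ∀ x ∈ U, DifferentiableAt ℝ v x)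
    {r : ℝ} (hr : r ≠ 0) : ∃ x ∈ U, ‖x + v x‖ ≠ r := by
  by_contra! hnorm
  borelize E
  let vol : Measure E := Measure.addHaar
  have hdet : ∀ x ∈ U, (ContinuousLinearMap.id ℝ E + fderiv ℝ v x).det = 0 := fun x hx =>
    det_eq_zero_of_norm_eventually_eq_const ((hasFDerivAt_id x).add (hd x hx).hasFDerivAt) hr
      ((hU.eventually_mem hx).mono fun y hy => hnorm y hy)
  have hvol : vol.real U = 0 := by
    rw [← setIntegral_det_id_add_fderiv vol hv hv0 hU.measurableSet hbdd.measure_lt_top.ne hd,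
      setIntegral_congr_fun hU.measurableSet hdet, integral_zero]
  exact (ENNReal.toReal_pos (hU.measure_pos vol hne).ne' hbdd.measure_lt_top.ne).ne' hvol

lemma inter_frontier_nonempty_of_isPreconnected {X : Type*} [TopologicalSpace X] {s K : Set X}
    (hs : IsPreconnected s) (h : (s ∩ K).Nonempty) (h' : (s ∩ Kᶜ).Nonempty) :
    (s ∩ frontier K).Nonempty := by
  by_contra hempty
  have hmem : ∀ x ∈ s, x ∈ K → x ∈ interior K := fun x hx hK =>
    by_contra fun hint => hempty ⟨x, hx, subset_closure hK, hint⟩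
  have hmem' : ∀ x ∈ s, x ∈ Kᶜ → x ∈ (closure K)ᶜ := fun x hx hK hcl =>
    hempty ⟨x, hx, hcl, fun hint => hK (interior_subset hint)⟩
  obtain ⟨x, -, hint, hcl⟩ := hs _ _ isOpen_interior isClosed_closure.isOpen_compl
    (fun x hx => (em (x ∈ K)).imp (hmem x hx) (hmem' x hx))
    (h.imp fun x hx => ⟨hx.1, hmem x hx.1 hx.2⟩) (h'.imp fun x hx => ⟨hx.1, hmem' x hx.1 hx.2⟩)
  exact hcl (subset_closure (interior_subset hint))

lemma lipschitzWith_indicator_of_frontier {V W : Type*} [NormedAddCommGroup V] [NormedSpace ℝ V]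
    [NormedAddCommGroup W] {K : Set V} (hK : IsClosed K) {w : V → W} {L : ℝ≥0}
    (hw : LipschitzOnWith L w K) (h0 : ∀ x ∈ frontier K, w x = 0) :
    LipschitzWith L (K.indicator w) := by
  have hcross : ∀ x ∈ K, ∀ y ∉ K, dist (K.indicator w x) (K.indicator w y) ≤ L * dist x y := by
    intro x hx y hy
    obtain ⟨z, hz, hzf⟩ := inter_frontier_nonempty_of_isPreconnected
      (convex_segment x y).isPreconnected ⟨x, left_mem_segment ℝ x y, hx⟩
      ⟨y, right_mem_segment ℝ x y, hy⟩
    have hdist := dist_add_dist_of_mem_segment hz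
    calc dist (K.indicator w x) (K.indicator w y) = dist (w x) (w z) := by
          rw [indicator_of_mem hx, indicator_of_notMem hy, h0 z hzf]
      _ ≤ L * dist x z := hw.dist_le_mul x hx z (hK.frontier_subset hzf)
      _ ≤ L * dist x y := by gcongr; linarith [dist_nonneg (x := z) (y := y)]
  refine LipschitzWith.of_dist_le_mul fun x y => ?_
  by_cases hx : x ∈ K <;> by_cases hy : y ∈ K
  · rw [indicator_of_mem hx, indicator_of_mem hy]
    exact hw.dist_le_mul x hx y hy
  · exact hcross x hx y hy
  · rw [dist_comm, dist_comm x]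
    exact hcross y hy x hx
  · rw [indicator_of_notMem hx, indicator_of_notMem hy, dist_self]
    positivity

/-- The discriminant of the quadratic equation `‖x + s • d‖ ^ 2 = 1` in `s`, divided by `4`. -/
noncomputable def exitDiscr (x d : E) : ℝ := ⟪x, d⟫ ^ 2 + ‖d‖ ^ 2 * (1 - ‖x‖ ^ 2)

/-- The time at which the ray from `x` in the direction `d` leaves the closed unit ball: the larger
root of `‖x + s • d‖ ^ 2 = 1`. It is `0` by convention if `d = 0`. -/
noncomputable def exitTime (x d : E) : ℝ := (-⟪x, d⟫ + √(exitDiscr x d)) / ‖d‖ ^ 2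

lemma norm_add_exitTime_smul {x d : E} (hx : ‖x‖ ≤ 1) (hd : d ≠ 0) :
    ‖x + exitTime x d • d‖ = 1 := by
  have hd2 : ‖d‖ ^ 2 ≠ 0 := pow_ne_zero 2 (norm_ne_zero_iff.2 hd)
  have hdiscr : 0 ≤ exitDiscr x d := add_nonneg (sq_nonneg _)
    (mul_nonneg (sq_nonneg _) (sub_nonneg.2 (pow_le_one₀ (norm_nonneg x) hx)))
  have hroot : exitTime x d * ‖d‖ ^ 2 + ⟪x, d⟫ = √(exitDiscr x d) := by
    rw [exitTime, div_mul_cancel₀ _ hd2]; ring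
  have hsq : ‖x + exitTime x d • d‖ ^ 2 = 1 := by
    refine mul_right_cancel₀ hd2 ?_
    calc ‖x + exitTime x d • d‖ ^ 2 * ‖d‖ ^ 2
        = (exitTime x d * ‖d‖ ^ 2 + ⟪x, d⟫) ^ 2 - exitDiscr x d + ‖d‖ ^ 2 := by
          rw [norm_add_sq_real, inner_smul_right, norm_smul, mul_pow, Real.norm_eq_abs, sq_abs,
            exitDiscr]
          ring
      _ = 1 * ‖d‖ ^ 2 := by rw [hroot, Real.sq_sqrt hdiscr]; ring
  exact (pow_eq_one_iff_of_nonneg (norm_nonneg _) two_ne_zero).1 hsq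

lemma exitTime_eq_zero {x d : E} (hx : ‖x‖ = 1) (hd : 0 ≤ ⟪x, d⟫) : exitTime x d = 0 := by
  simp [exitTime, exitDiscr, hx, Real.sqrt_sq hd]

lemma inner_sub_pos_of_norm_le {x y : E} (h : ‖y‖ ≤ ‖x‖) (hne : y ≠ x) : 0 < ⟪x, x - y⟫ := by
  have hpos : 0 < ‖x - y‖ ^ 2 := pow_pos (norm_pos_iff.2 (sub_ne_zero.2 hne.symm)) 2
  rw [norm_sub_sq_real] at hpos
  rw [inner_sub_right, real_inner_self_eq_norm_sq]
  nlinarith [norm_nonneg y]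

lemma exitDiscr_pos {x y : E} (hx : ‖x‖ ≤ 1) (hy : ‖y‖ ≤ 1) (hne : y ≠ x) :
    0 < exitDiscr x (x - y) := by
  rcases hx.lt_or_eq with hlt | heq
  · have hpos : 0 < ‖x - y‖ ^ 2 := pow_pos (norm_pos_iff.2 (sub_ne_zero.2 hne.symm)) 2
    exact add_pos_of_nonneg_of_pos (sq_nonneg _)
      (mul_pos hpos (sub_pos.2 (pow_lt_one₀ (norm_nonneg x) hlt two_ne_zero)))
  · have hinner := inner_sub_pos_of_norm_le (hy.trans_eq heq.symm) hne
    simp only [exitDiscr, heq, one_pow, sub_self, mul_zero, add_zero]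
    positivity

lemma contDiffAt_exitTime {p : E → E} {d : E → E} {x : E} {n : WithTop ℕ∞}
    (hp : ContDiffAt ℝ n p x) (hd : ContDiffAt ℝ n d x) (hdiscr : exitDiscr (p x) (d x) ≠ 0)
    (hd0 : d x ≠ 0) : ContDiffAt ℝ n (fun y => exitTime (p y) (d y)) x := by
  have hinner : ContDiffAt ℝ n (fun y => ⟪p y, d y⟫) x := hp.inner ℝ hd
  have hdisc : ContDiffAt ℝ n (fun y => exitDiscr (p y) (d y)) x :=
    (hinner.pow 2).add ((hd.norm_sq ℝ).mul (contDiffAt_const.sub (hp.norm_sq ℝ)))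
  exact (hinner.neg.add (hdisc.sqrt hdiscr)).div (hd.norm_sq ℝ)
    (pow_ne_zero 2 (norm_ne_zero_iff.2 hd0))

variable [FiniteDimensional ℝ E]

-- Without fixed points, following the ray from `g x` through `x` until it leaves the ball would
-- retract the ball to the sphere; `w` is the displacement of this retraction.
lemma exists_isFixedPt_of_contDiff {g : E → E} (hg : ContDiff ℝ 1 g) (hb : ∀ x, ‖g x‖ ≤ 1) :
    ∃ x, g.IsFixedPt x := by
  by_contra! hne
  have hne : ∀ x, g x ≠ x := hne
  let w : E → E := fun x => exitTime x (x - g x) • (x - g x)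
  have hwsmooth : ∀ x ∈ closedBall (0 : E) 1, ContDiffAt ℝ 1 w x := fun x hx => by
    have hd : ContDiffAt ℝ 1 (fun y => y - g y) x := contDiffAt_id.sub hg.contDiffAt
    exact (contDiffAt_exitTime contDiffAt_id hd
      (exitDiscr_pos (mem_closedBall_zero_iff.1 hx) (hb x) (hne x)).ne'
      (sub_ne_zero.2 (hne x).symm)).smul hd
  have hwsphere : ∀ x ∈ sphere (0 : E) 1, w x = 0 := fun x hx => by
    have hx : ‖x‖ = 1 := mem_sphere_zero_iff_norm.1 hx
    have hexit := exitTime_eq_zero hx (inner_sub_pos_of_norm_le (hx ▸ hb x) (hne x)).le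
    simp only [w, hexit, zero_smul]
  obtain ⟨L, hL⟩ := LocallyLipschitzOn.exists_lipschitzOnWith_of_compact
    (isCompact_closedBall (0 : E) 1) (ContDiffOn.locallyLipschitzOn (convex_closedBall 0 1)
      fun x hx => (hwsmooth x hx).contDiffWithinAt)
  have hv := lipschitzWith_indicator_of_frontier isClosed_closedBall hL
    (fun x hx => hwsphere x (frontier_closedBall_subset_sphere hx))
  have hv0 : ∀ x ∉ ball (0 : E) 1, (closedBall (0 : E) 1).indicator w x = 0 := fun x hx =>
    indicator_apply_eq_zero.2 fun hmem => hwsphere x (le_antisymm hmem (not_lt.1 hx))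
  have hvd : ∀ x ∈ ball (0 : E) 1, DifferentiableAt ℝ ((closedBall (0 : E) 1).indicator w) x := by
    intro x hx
    refine ((hwsmooth x (ball_subset_closedBall hx)).differentiableAt one_ne_zero)
      |>.congr_of_eventuallyEq ?_
    filter_upwards [isOpen_ball.mem_nhds hx] with y hy
    exact indicator_of_mem (ball_subset_closedBall hy) w
  obtain ⟨x, hx, hnorm⟩ := exists_norm_add_ne_of_lipschitzWith isOpen_ball isBounded_ball
    ⟨0, mem_ball_self one_pos⟩ hv hv0 hvd one_ne_zero
  rw [indicator_of_mem (ball_subset_closedBall hx)] at hnorm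
  exact hnorm (norm_add_exitTime_smul (mem_closedBall_zero_iff.1 (ball_subset_closedBall hx))
    (sub_ne_zero.2 (hne x).symm))

lemma exists_isFixedPt_of_forall_exists_dist_le {X : Type*} [MetricSpace X] {S : Set X}
    (hS : IsCompact S) {F : X → X} (hF : ContinuousOn F S)
    (h : ∀ ε > 0, ∃ x ∈ S, dist (F x) x ≤ ε) : ∃ x ∈ S, F.IsFixedPt x := by
  obtain ⟨x₀, hx₀, -⟩ := h 1 one_pos
  obtain ⟨x, hx, hmin⟩ := hS.exists_isMinOn ⟨x₀, hx₀⟩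
    (continuous_dist.comp_continuousOn (hF.prodMk continuousOn_id))
  refine ⟨x, hx, dist_le_zero.1 (le_of_forall_pos_le_add fun ε hε => ?_)⟩
  obtain ⟨y, hy, hle⟩ := h ε hε
  rw [zero_add]
  exact (hmin hy).trans hle

lemma exists_isFixedPt_of_norm_le_one {g : E → E} (hg : Continuous g) (hb : ∀ x, ‖g x‖ ≤ 1) :
    ∃ x, g.IsFixedPt x := by
  suffices h : ∀ ε > 0, ∃ x ∈ closedBall (0 : E) 1, dist (g x) x ≤ ε from
    (exists_isFixedPt_of_forall_exists_dist_le (isCompact_closedBall 0 1) hg.continuousOn h).imp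
      fun x hx => hx.2
  intro ε hε
  obtain ⟨g', hg', happrox, -⟩ := hg.exists_contDiff_approx 1 (ε := fun _ => ε / 2)
    continuous_const (fun _ => by positivity)
  have hpos : 0 < 1 + ε / 2 := by positivity
  have hscaled : ∀ x, ‖(1 + ε / 2)⁻¹ • g' x‖ ≤ 1 := fun x => by
    rw [norm_smul, norm_inv, Real.norm_of_nonneg hpos.le, inv_mul_le_iff₀ hpos, mul_one]
    have hdist := happrox x
    rw [dist_eq_norm] at hdist
    linarith [norm_le_norm_add_norm_sub' (g' x) (g x), hb x]
  obtain ⟨x, hx⟩ := exists_isFixedPt_of_contDiff (contDiff_const.smul hg') hscaled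
  have hx1 : ‖x‖ ≤ 1 := hx.eq ▸ hscaled x
  have hg'x : g' x = (1 + ε / 2) • x := (inv_smul_eq_iff₀ hpos.ne').1 hx.eq
  refine ⟨x, mem_closedBall_zero_iff.2 hx1, ?_⟩
  have hdist : dist (g' x) x ≤ ε / 2 := by
    rw [hg'x, dist_eq_norm, add_smul, one_smul, add_sub_cancel_left, norm_smul,
      Real.norm_of_nonneg (by positivity)]
    exact mul_le_of_le_one_right (by positivity) hx1
  linarith [happrox x, dist_triangle_left (g x) x (g' x)]

omit [FiniteDimensional ℝ E] in
lemma exists_lipschitzWith_retraction {K : Set E} (hne : K.Nonempty) (hK : IsComplete K)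
    (hconv : Convex ℝ K) :
    ∃ r : E → E, LipschitzWith 1 r ∧ (∀ x, r x ∈ K) ∧ ∀ x ∈ K, r x = x := by
  choose r hrK hr using exists_norm_eq_iInf_of_complete_convex hne hK hconv
  have hangle : ∀ x, ∀ y ∈ K, ⟪x - r x, y - r x⟫ ≤ 0 := fun x =>
    (norm_eq_iInf_iff_real_inner_le_zero hconv (hrK x)).1 (hr x)
  refine ⟨r, LipschitzWith.of_dist_le_mul fun x y => ?_, hrK, fun x hx => ?_⟩
  · have hsum : ‖r x - r y‖ ^ 2 ≤ ⟪x - y, r x - r y⟫ := by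
      have hx := hangle x (r y) (hrK y)
      have hy := hangle y (r x) (hrK x)
      rw [← neg_sub (r x) (r y), inner_neg_right] at hx
      rw [← real_inner_self_eq_norm_sq]
      simp only [inner_sub_left, inner_sub_right] at hx hy ⊢
      linarith
    have hmul : ‖r x - r y‖ * ‖r x - r y‖ ≤ ‖x - y‖ * ‖r x - r y‖ := by
      rw [← sq]
      exact hsum.trans (real_inner_le_norm _ _)
    rw [NNReal.coe_one, one_mul, dist_eq_norm, dist_eq_norm]
    rcases (norm_nonneg (r x - r y)).eq_or_lt with h | h
    · exact h ▸ norm_nonneg _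
    · exact le_of_mul_le_mul_right hmul h
  · have h := hangle x x hx
    exact (sub_eq_zero.1 (real_inner_self_nonpos.1 h)).symm

lemma exists_isFixedPt_of_isCompact_of_convex_euclidean {K : Set E} (hK : IsCompact K)
    (hconv : Convex ℝ K) (hne : K.Nonempty) {g : E → E} (hg : ContinuousOn g K)
    (hmaps : MapsTo g K K) : ∃ x ∈ K, g.IsFixedPt x := by
  obtain ⟨r, hr, hrK, hrid⟩ := exists_lipschitzWith_retraction hne hK.isComplete hconv
  obtain ⟨R, hR, hbound⟩ := hK.isBounded.exists_pos_norm_le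
  obtain ⟨x, hx⟩ := exists_isFixedPt_of_norm_le_one (g := fun x => R⁻¹ • g (r (R • x)))
    ((hg.comp_continuous (hr.continuous.comp (continuous_const_smul R))
      fun x => hrK _).const_smul _)
    (fun x => by
      rw [norm_smul, norm_inv, Real.norm_of_nonneg hR.le, inv_mul_le_iff₀ hR, mul_one]
      exact hbound _ (hmaps (hrK _)))
  have hfix : g (r (R • x)) = R • x := (inv_smul_eq_iff₀ hR.ne').1 hx.eq
  have hmem : R • x ∈ K := hfix ▸ hmaps (hrK _)
  exact ⟨R • x, hmem, by rwa [hrid _ hmem] at hfix⟩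

lemma exists_isFixedPt_of_isCompact_of_convex_finiteDimensional {V : Type*}
    [NormedAddCommGroup V] [NormedSpace ℝ V] [FiniteDimensional ℝ V] {K : Set V}
    (hK : IsCompact K) (hconv : Convex ℝ K) (hne : K.Nonempty) {g : V → V}
    (hg : ContinuousOn g K) (hmaps : MapsTo g K K) : ∃ x ∈ K, g.IsFixedPt x := by
  let e := toEuclidean (E := V)
  obtain ⟨x, hx, hfix⟩ := exists_isFixedPt_of_isCompact_of_convex_euclidean
    (K := e.symm ⁻¹' K) (e.symm.toHomeomorph.isCompact_preimage.2 hK)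
    (hconv.linear_preimage e.symm.toLinearMap)
    (hne.preimage e.symm.surjective) (g := e ∘ g ∘ e.symm)
    (e.continuous.comp_continuousOn (hg.comp e.symm.continuous.continuousOn (mapsTo_preimage _ _)))
    (fun x hx => by simpa using hmaps hx)
  exact ⟨e.symm x, hx, e.eq_symm_apply.2 hfix⟩

end Brouwer

section Schauder

lemma exists_partition_of_unity_subordinate_ball {X : Type*} [PseudoMetricSpace X] {S : Set X}
    (hS : IsCompact S) {ε : ℝ} (hε : 0 < ε) :
    ∃ t : Finset X, ↑t ⊆ S ∧ ∃ π : X → t → ℝ, ContinuousOn π S ∧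
      (∀ x ∈ S, π x ∈ stdSimplex ℝ t) ∧ ∀ x y, π x y ≠ 0 → dist (y : X) x < ε := by
  obtain ⟨s, hsS, hsfin, hcover⟩ := hS.finite_cover_balls hε
  lift s to Finset X using hsfin
  let a : X → s → ℝ := fun x y => max (ε - dist (y : X) x) 0
  have ha : ∀ x y, 0 ≤ a x y := fun x y => le_max_right _ _
  have hsum : ∀ x ∈ S, 0 < ∑ y, a x y := fun x hx => by
    obtain ⟨y, hy, hxy⟩ := mem_iUnion₂.1 (hcover hx)
    exact Finset.sum_pos' (fun y _ => ha x y)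
      ⟨⟨y, hy⟩, Finset.mem_univ _, lt_max_of_lt_left (sub_pos.2 (Metric.mem_ball'.1 hxy))⟩
  refine ⟨s, hsS, fun x y => a x y / ∑ y, a x y, ?_, fun x hx => ⟨fun y => ?_, ?_⟩,
    fun x y hxy => ?_⟩
  · have hcont : Continuous a := by fun_prop
    exact continuousOn_pi.2 fun y => (by fun_prop : Continuous fun x => a x y).continuousOn.div
      (by fun_prop : Continuous fun x => ∑ y, a x y).continuousOn fun x hx => (hsum x hx).ne'
  · exact div_nonneg (ha x y) (hsum x hx).le
  · rw [← Finset.sum_div, div_self (hsum x hx).ne']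
  · by_contra! hle
    exact hxy (by simp only [a, max_eq_right (sub_nonpos.2 hle), zero_div])

-- Schauder's fixed point theorem: composing with a partition of unity subordinate to `ε`-balls
-- moves points by at most `ε` and makes the map factor through a simplex.
theorem exists_isFixedPt_of_isCompact_of_convex {V : Type*} [NormedAddCommGroup V]
    [NormedSpace ℝ V] {S : Set V} (hS : IsCompact S) (hconv : Convex ℝ S) (hne : S.Nonempty)
    {F : V → V} (hF : ContinuousOn F S) (hmaps : MapsTo F S S) : ∃ x ∈ S, F.IsFixedPt x := by
  refine exists_isFixedPt_of_forall_exists_dist_le hS hF fun ε hε => ?_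
  obtain ⟨t, htS, π, hπcont, hπ, hdist⟩ := exists_partition_of_unity_subordinate_ball hS hε
  let ι : (t → ℝ) → V := fun w => ∑ y, w y • (y : V)
  have hιS : MapsTo ι (stdSimplex ℝ t) S := fun w hw =>
    hconv.sum_mem (fun y _ => hw.1 y) hw.2 fun y _ => htS y.2
  have hιcont : Continuous ι := by fun_prop
  have hsimplex : (stdSimplex ℝ t).Nonempty := ⟨_, hπ _ hne.some_mem⟩
  obtain ⟨w, hw, hfix⟩ := exists_isFixedPt_of_isCompact_of_convex_finiteDimensional
    (isCompact_stdSimplex ℝ t) (convex_stdSimplex ℝ t) hsimplex (g := π ∘ F ∘ ι)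
    (hπcont.comp (hF.comp hιcont.continuousOn hιS) (hmaps.comp hιS))
    (fun w hw => hπ _ (hmaps (hιS hw)))
  refine ⟨ι w, hιS hw, ?_⟩
  refine Metric.mem_closedBall'.1 ?_
  have hmem := (convex_closedBall (F (ι w)) ε).finsum_mem hw.1
    ((finsum_eq_sum_of_fintype _).trans hw.2) (z := fun y : t => (y : V)) fun y hy =>
      (hdist _ y (by rw [← hfix.eq] at hy; exact hy)).le
  rwa [finsum_eq_sum_of_fintype] at hmem

end Schauder

section Gluing

lemma hasDerivAt_of_hasDerivWithinAt_Ici {E : Type*} [NormedAddCommGroup E] [NormedSpace ℝ E]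
    [CompleteSpace E] {p p' : ℝ → E} (hp : Continuous p) (hp' : Continuous p')
    (h : ∀ t, HasDerivWithinAt p (p' t) (Ici t) t) (t : ℝ) : HasDerivAt p (p' t) t := by
  have hprim : p = fun s => p 0 + ∫ r in (0 : ℝ)..s, p' r := funext fun s => by
    rw [intervalIntegral.integral_eq_sub_of_hasDeriv_right hp.continuousOn
      (fun r _ => (h r).Ioi_of_Ici) (hp'.intervalIntegrable 0 s), add_sub_cancel]
  rw [hprim]
  exact (hp'.integral_hasStrictDerivAt 0 t).hasDerivAt.const_add _

lemma hasDerivWithinAt_Ici_comp_sub_const {p : ℝ → ℝ} {p' c t : ℝ}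
    (h : HasDerivWithinAt p p' (Ici (t - c)) (t - c)) :
    HasDerivWithinAt (fun s => p (s - c)) p' (Ici t) t := by
  have hcomp := h.comp t ((hasDerivWithinAt_id t (Ici t)).sub_const c)
    fun s hs => sub_le_sub_right hs c
  rwa [mul_one] at hcomp

lemma exists_periodic_continuous_eqOn {X : Type*} [TopologicalSpace X] {q : ℝ → X} {a T : ℝ}
    (hT : 0 < T) (hq : ContinuousOn q (Icc a (a + T))) (hend : q a = q (a + T)) :
    ∃ p : ℝ → X, Continuous p ∧ Function.Periodic p T ∧ EqOn p q (Icc a (a + T)) := by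
  have : Fact (0 < T) := ⟨hT⟩
  have hlift : ∀ t ∈ Ico a (a + T), AddCircle.liftIco T a q t = q t := fun t ht =>
    AddCircle.liftIco_coe_apply ht
  refine ⟨fun t => AddCircle.liftIco T a q t,
    (AddCircle.liftIco_continuous hend hq).comp (AddCircle.continuous_mk' T),
    fun t => by simp only [AddCircle.coe_add_period], fun t ht => ?_⟩
  rcases ht.2.lt_or_eq with hlt | rfl
  · exact hlift t ⟨ht.1, hlt⟩
  · simpa only [AddCircle.coe_add_period, ← hend] using hlift a ⟨le_rfl, by linarith⟩

/-- The feedback conjugate to `f` under `x ↦ -x`: if `p` solves the delay equation for `f`, then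
`-p` solves it for `reflect f`. -/
def reflect (f : ℝ → ℝ) : ℝ → ℝ := fun x => -f (-x)

/-- The history seen by a negative half-wave `-v` starting at the zero `z` of `u`, in time counted
from `z`: it is `u (z + r)` for `r ≤ 0` and `-v r` for `r ≥ 0`, since `u z = 0 = v 0`. -/
def waveHistory (z : ℝ) (u v : ℝ → ℝ) (r : ℝ) : ℝ := u (z + min r 0) - v (max r 0)

/-- `v` has its consecutive zeros at `0` and `w`, is positive in between, and the negative half-wave
`-v` follows the delay equation for `f` when it is preceded by `u`, ending at time `z`. Only right
derivatives are required, so that `v` may have a corner at its endpoints. -/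
structure IsHalfWave (f : ℝ → ℝ) (z : ℝ) (u : ℝ → ℝ) (w : ℝ) (v : ℝ → ℝ) : Prop where
  one_lt : 1 < w
  continuous : Continuous v
  map_zero : v 0 = 0
  map_end : v w = 0
  pos : ∀ t ∈ Ioo 0 w, 0 < v t
  hasDerivWithinAt : ∀ t ∈ Ico 0 w,
    HasDerivWithinAt v (-f (waveHistory z u v (t - 1))) (Ici t) t

lemma waveHistory_of_nonpos {z : ℝ} {u v : ℝ → ℝ} (hv : v 0 = 0) {r : ℝ} (hr : r ≤ 0) :
    waveHistory z u v r = u (z + r) := by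
  rw [waveHistory, min_eq_left hr, max_eq_right hr, hv, sub_zero]

lemma waveHistory_of_nonneg {z : ℝ} {u v : ℝ → ℝ} (hu : u z = 0) {r : ℝ} (hr : 0 ≤ r) :
    waveHistory z u v r = -v r := by
  rw [waveHistory, min_eq_right hr, max_eq_left hr, add_zero, hu, zero_sub]

variable {f u v p : ℝ → ℝ} {z w c : ℝ}

lemma IsHalfWave.hasDerivWithinAt_of_eq (hv : IsHalfWave f z u w v)
    (hp : ∀ r ∈ Icc (-1) w, p (c + r) = waveHistory z u v r) (hu : u z = 0) {t : ℝ}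
    (ht : t ∈ Ico c (c + w)) : HasDerivWithinAt p (f (p (t - 1))) (Ici t) t := by
  have hmem : t - c ∈ Ico 0 w := ⟨by linarith [ht.1], by linarith [ht.2]⟩
  have hhist : p (t - 1) = waveHistory z u v (t - c - 1) := by
    rw [← hp _ ⟨by linarith [hmem.1], by linarith [hmem.2]⟩]; congr 1; ring
  have hderiv := (hasDerivWithinAt_Ici_comp_sub_const (hv.hasDerivWithinAt _ hmem)).neg
  rw [neg_neg, ← hhist] at hderiv
  have heq : ∀ s ∈ Ico c (c + w), p s = -v (s - c) := fun s hs => by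
    have hs0 : 0 ≤ s - c := sub_nonneg.2 hs.1
    rw [← waveHistory_of_nonneg hu hs0, ← hp _ ⟨by linarith, by linarith [hs.2]⟩, add_sub_cancel]
  refine hderiv.congr_of_eventuallyEq ?_ (heq t ht)
  filter_upwards [Ico_mem_nhdsGE ht.2] with s hs
  exact heq s ⟨ht.1.trans hs.1, hs.2⟩

lemma hasDerivWithinAt_of_periodic_of_forall_mem_Ico {a T : ℝ}
    (hp : Function.Periodic p T) (hT : 0 < T)
    (h : ∀ t ∈ Ico a (a + T), HasDerivWithinAt p (f (p (t - 1))) (Ici t) t) (t : ℝ) :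
    HasDerivWithinAt p (f (p (t - 1))) (Ici t) t := by
  obtain ⟨n, hn, -⟩ := existsUnique_add_zsmul_mem_Ico hT t a
  have hper : ∀ s, p (s + n • T) = p s := hp.zsmul n
  have hderiv := h _ hn
  rw [add_sub_right_comm, hper, ← sub_neg_eq_add] at hderiv
  simpa only [sub_neg_eq_add, hper] using hasDerivWithinAt_Ici_comp_sub_const hderiv

lemma one_lt_abs_sub_of_periodic {T : ℝ} (hp : Function.Periodic p T) (hw : 1 < w) (hz : 1 < z)
    (hT : T = z + w) (hneg : ∀ t ∈ Ioo (-w) 0, p t < 0) (hpos : ∀ t ∈ Ioo 0 z, 0 < p t)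
    {t t' : ℝ} (ht : p t = 0) (ht' : p t' = 0) (hne : t ≠ t') : 1 < |t - t'| := by
  wlog hlt : t < t' generalizing t t'
  · rw [abs_sub_comm]
    exact this ht' ht hne.symm (hne.symm.lt_of_le (not_lt.1 hlt))
  obtain ⟨n, hn, -⟩ := existsUnique_add_zsmul_mem_Ico (by linarith : 0 < T) t (-w)
  have hper : ∀ s, p (s + n • T) = p s := hp.zsmul n
  rw [abs_sub_comm, abs_of_pos (sub_pos.2 hlt)]
  by_contra! hle
  rw [← hper] at ht ht'
  have hmem : t + n • T = -w ∨ t + n • T = 0 := by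
    rcases hn.1.eq_or_lt with h | h
    · exact Or.inl h.symm
    rcases lt_trichotomy (t + n • T) 0 with h0 | h0 | h0
    · exact absurd ht (hneg _ ⟨h, h0⟩).ne
    · exact Or.inr h0
    · exact absurd ht (hpos _ ⟨h0, by linarith [hn.2]⟩).ne'
  rcases hmem with h | h
  · exact (hneg (t' + n • T) ⟨by linarith, by linarith⟩).ne ht'
  · exact (hpos (t' + n • T) ⟨by linarith, by linarith⟩).ne' ht'

lemma exists_periodic_eq_neg_waveHistory (hu : Continuous u) (hv : Continuous v) (hu0 : u 0 = 0)
    (huz : u z = 0) (hv0 : v 0 = 0) (hvw : v w = 0) (hz : 0 < z) (hw : 0 ≤ w) :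
    ∃ p : ℝ → ℝ, Continuous p ∧ Function.Periodic p (z + w) ∧
      ∀ r ∈ Icc (-w) z, p r = -waveHistory w v u r := by
  have hq : Continuous fun r => -waveHistory w v u r := by
    unfold waveHistory
    fun_prop
  obtain ⟨p, hpcont, hper, hp⟩ := exists_periodic_continuous_eqOn (a := -w) (T := z + w)
    (by linarith) hq.continuousOn (by
      rw [neg_add_cancel_comm_assoc, waveHistory_of_nonpos hu0 (by linarith),
        waveHistory_of_nonneg hvw hz.le, add_neg_cancel, hv0, huz, neg_zero, neg_zero])
  rw [neg_add_cancel_comm_assoc] at hp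
  exact ⟨p, hpcont, hper, hp⟩

theorem exists_isSOP_of_isHalfWave (hf : Continuous f) (hv : IsHalfWave f z u w v)
    (hu : IsHalfWave (reflect f) w v z u) : ∃ p, IsSOP f p ∧ EqOn p u (Icc 0 z) := by
  have hw := hv.one_lt
  have hz := hu.one_lt
  obtain ⟨p, hpcont, hper, hp⟩ := exists_periodic_eq_neg_waveHistory hu.continuous hv.continuous
    hu.map_zero hu.map_end hv.map_zero hv.map_end (by linarith : 0 < z) (by linarith)
  have hpu : EqOn p u (Icc 0 z) := fun t ht => by
    rw [hp t ⟨by linarith [ht.1], ht.2⟩, waveHistory_of_nonneg hv.map_end ht.1, neg_neg]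
  have hpv : ∀ t ∈ Icc (-w) 0, p t = -v (w + t) := fun t ht => by
    rw [hp t ⟨ht.1, by linarith [ht.2]⟩, waveHistory_of_nonpos hu.map_zero ht.2]
  have hpos : ∀ t ∈ Ioo 0 z, 0 < p t := fun t ht =>
    (hu.pos t ht).trans_eq (hpu (Ioo_subset_Icc_self ht)).symm
  have hneg : ∀ t ∈ Ioo (-w) 0, p t < 0 := fun t ht => by
    rw [hpv t (Ioo_subset_Icc_self ht), neg_lt_zero]
    exact hv.pos _ ⟨by linarith [ht.1], by linarith [ht.2]⟩
  have hderivu : ∀ t ∈ Ico 0 (0 + z), HasDerivWithinAt p (f (p (t - 1))) (Ici t) t := by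
    intro t ht
    simpa [reflect] using (hu.hasDerivWithinAt_of_eq (p := -p) (fun r hr => by
      rw [zero_add, Pi.neg_apply, hp r ⟨by linarith [hr.1], hr.2⟩, neg_neg]) hv.map_end ht).neg
  have hderivv : ∀ t ∈ Ico (-w) (-w + w), HasDerivWithinAt p (f (p (t - 1))) (Ici t) t := by
    refine fun t ht => hv.hasDerivWithinAt_of_eq (fun r hr => ?_) hu.map_end ht
    rcases le_total r 0 with hr0 | hr0
    · rw [waveHistory_of_nonpos hv.map_zero hr0, ← hper, ← hpu ⟨by linarith [hr.1], by linarith⟩]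
      congr 1; ring
    · rw [waveHistory_of_nonneg hu.map_end hr0, hpv _ ⟨by linarith, by linarith [hr.2]⟩,
        add_neg_cancel_left]
  have hderiv := hasDerivWithinAt_of_periodic_of_forall_mem_Ico (f := f) (a := -w) hper
    (by linarith) fun t ht => (lt_or_ge t 0).elim
      (fun h => hderivv t ⟨ht.1, by linarith⟩) fun h => hderivu t ⟨h, by linarith [ht.2]⟩
  refine ⟨p, ⟨hasDerivAt_of_hasDerivWithinAt_Ici hpcont (by fun_prop) hderiv,
    ⟨z + w, by linarith, hper⟩, ⟨1, -1, ?_⟩, fun t t' =>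
      one_lt_abs_sub_of_periodic hper hw hz rfl hneg hpos⟩, hpu⟩
  exact ((hneg (-1) ⟨by linarith, by norm_num⟩).trans (hpos 1 ⟨one_pos, hz⟩)).ne'

end Gluing

section IncrementSet

variable {X : Type*} [LinearOrder X] {A B u : X → ℝ} {x₀ : X}

/-- The functions vanishing at `x₀` whose increments lie between those of `A` and those of `B`. -/
def incrementSet (A B : X → ℝ) (x₀ : X) : Set (X → ℝ) :=
  {u | u x₀ = 0 ∧ Monotone (u - A) ∧ Monotone (B - u)}

lemma abs_sub_le_of_mem_incrementSet (hu : u ∈ incrementSet A B x₀) (x y : X) :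
    |u x - u y| ≤ |A x - A y| + |B x - B y| := by
  wlog h : y ≤ x generalizing x y
  · simpa only [abs_sub_comm] using this y x (le_of_not_ge h)
  have hlower := hu.2.1 h
  have hupper := hu.2.2 h
  simp only [Pi.sub_apply] at hlower hupper
  exact abs_le.2 ⟨by linarith [neg_abs_le (A x - A y), abs_nonneg (B x - B y)],
    by linarith [le_abs_self (B x - B y), abs_nonneg (A x - A y)]⟩

lemma convex_incrementSet : Convex ℝ (incrementSet A B x₀) := by
  intro u hu v hv c d hc hd hcd
  have hcd' : ∀ w : X → ℝ, c • w + d • w = w := fun w => by rw [← add_smul, hcd, one_smul]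
  refine ⟨by simp [hu.1, hv.1], ?_, ?_⟩
  · have h : Monotone (c • (u - A) + d • (v - A)) :=
      (hu.2.1.const_smul hc).add (hv.2.1.const_smul hd)
    rwa [smul_sub, smul_sub, sub_add_sub_comm, hcd'] at h
  · have h : Monotone (c • (B - u) + d • (B - v)) :=
      (hu.2.2.const_smul hc).add (hv.2.2.const_smul hd)
    rwa [smul_sub, smul_sub, sub_add_sub_comm, hcd'] at h

lemma isCompact_incrementSet : IsCompact (incrementSet A B x₀) := by
  have hclosed : IsClosed (incrementSet A B x₀) :=
    (isClosed_singleton.preimage (continuous_apply x₀)).inter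
      ((isClosed_monotone.preimage (continuous_sub_right A)).inter
        (isClosed_monotone.preimage (continuous_sub_left B)))
  let r : X → ℝ := fun x => |A x - A x₀| + |B x - B x₀|
  have hbox : IsCompact (univ.pi fun x => Icc (-r x) (r x)) :=
    isCompact_univ_pi fun x => isCompact_Icc
  refine hbox.of_isClosed_subset hclosed fun u hu x _ => abs_le.1 ?_
  simpa only [hu.1, sub_zero] using abs_sub_le_of_mem_incrementSet hu x x₀

lemma isCompact_setOf_coe_mem_incrementSet [TopologicalSpace X] (hA : Continuous A)
    (hB : Continuous B) : IsCompact {u : C(X, ℝ) | ⇑u ∈ incrementSet A B x₀} := by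
  have hmod : ∀ x, Tendsto (fun y => |A x - A y| + |B x - B y|) (nhds x) (nhds 0) := fun x => by
    have h : Continuous fun y => |A x - A y| + |B x - B y| := by fun_prop
    simpa only [sub_self, abs_zero, add_zero] using h.tendsto x
  refine ArzelaAscoli.isCompact_of_equicontinuous _ ?_ fun x =>
    Metric.equicontinuousAt_of_continuity_modulus _ (hmod x) _
      (Eventually.of_forall fun y u => abs_sub_le_of_mem_incrementSet u.2 x y)
  convert isCompact_incrementSet (A := A) (B := B) (x₀ := x₀)
  refine subset_antisymm (image_subset_iff.2 fun u hu => hu) fun u hu => ?_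
  refine ⟨⟨u, continuous_iff_continuousAt.2 fun x => tendsto_iff_dist_tendsto_zero.2 ?_⟩, hu, rfl⟩
  refine squeeze_zero (fun _ => dist_nonneg) (fun y => ?_) (hmod x)
  rw [dist_comm]
  exact abs_sub_le_of_mem_incrementSet hu x y

end IncrementSet

section Hump

variable {μ σ b L z : ℝ} {U V : ℝ → ℝ}

lemma monotoneOn_Icc_of_monotoneOn_Icc {g : ℝ → ℝ} {r s t : ℝ} (h₁ : MonotoneOn g (Icc r s))
    (h₂ : MonotoneOn g (Icc s t)) (hrs : r ≤ s) (hst : s ≤ t) : MonotoneOn g (Icc r t) := by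
  rw [← Icc_union_Icc_eq_Icc hrs hst]
  exact h₁.union_right h₂ (isGreatest_Icc hrs) (isLeast_Icc hst)

lemma monotoneOn_sub_of_eqOn_affine {g g' A : ℝ → ℝ} {c d r s : ℝ}
    (hg : ∀ t, HasDerivAt g (g' t) t) (hA : EqOn A (fun t => c * t + d) (Icc r s))
    (hle : ∀ t ∈ Icc r s, c ≤ g' t) : MonotoneOn (g - A) (Icc r s) := by
  have hderiv : ∀ t, HasDerivAt (fun t => g t - (c * t + d)) (g' t - c) t := fun t =>
    (hg t).sub ((hasDerivAt_const_mul c).add_const d)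
  have hmono : MonotoneOn (fun t => g t - (c * t + d)) (Icc r s) :=
    monotoneOn_of_hasDerivWithinAt_nonneg (convex_Icc r s)
      (fun t _ => (hderiv t).continuousAt.continuousWithinAt)
      (fun t _ => (hderiv t).hasDerivWithinAt)
      fun t ht => sub_nonneg.2 (hle t (interior_subset ht))
  exact hmono.congr fun t ht => congrArg (g t - ·) (hA ht).symm

/-- The slowest growth allowed for a hump: speed `σ` up to time `1 - b`, then at rest up to time
`1`, afterwards speed `-μ`. -/
noncomputable def humpLower (μ σ b t : ℝ) : ℝ := σ * min t (1 - b) - μ * max (t - 1) 0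

/-- The fastest growth allowed for a hump: speed `μ` up to time `1`, then at rest up to time
`1 + b`, afterwards speed `-σ`. -/
noncomputable def humpUpper (μ σ b t : ℝ) : ℝ := μ * min t 1 - σ * max (t - (1 + b)) 0

lemma continuous_humpLower : Continuous (humpLower μ σ b) := by
  unfold humpLower
  fun_prop

lemma continuous_humpUpper : Continuous (humpUpper μ σ b) := by
  unfold humpUpper
  fun_prop

lemma monotoneOn_sub_humpLower {h : ℝ → ℝ} (hb : 0 ≤ b) (hb1 : b ≤ 1) (hL : 1 ≤ L)
    (hU : ∀ t, HasDerivAt U (h t) t) (hrise : ∀ t ∈ Icc 0 (1 - b), σ ≤ h t)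
    (hrest : ∀ t ∈ Icc (1 - b) 1, 0 ≤ h t) (hfall : ∀ t ∈ Icc 1 L, -μ ≤ h t) :
    MonotoneOn (U - humpLower μ σ b) (Icc 0 L) := by
  refine monotoneOn_Icc_of_monotoneOn_Icc (s := 1) (monotoneOn_Icc_of_monotoneOn_Icc (s := 1 - b)
    (monotoneOn_sub_of_eqOn_affine (c := σ) (d := 0) hU (fun t ht => ?_) hrise)
    (monotoneOn_sub_of_eqOn_affine (c := 0) (d := σ * (1 - b)) hU (fun t ht => ?_) hrest)
    (by linarith) (by linarith))
    (monotoneOn_sub_of_eqOn_affine (c := -μ) (d := σ * (1 - b) + μ) hU (fun t ht => ?_) hfall)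
    (by linarith) hL <;> simp only [humpLower]
  · rw [min_eq_left ht.2, max_eq_right (by linarith [ht.2]), mul_zero, sub_zero, add_zero]
  · rw [min_eq_right ht.1, max_eq_right (by linarith [ht.2])]
    ring
  · rw [min_eq_right (by linarith [ht.1]), max_eq_left (by linarith [ht.1])]
    ring

lemma monotoneOn_humpUpper_sub {h : ℝ → ℝ} (hb : 0 ≤ b) (hL : 1 + b ≤ L)
    (hU : ∀ t, HasDerivAt U (h t) t) (hrise : ∀ t ∈ Icc 0 1, h t ≤ μ)
    (hrest : ∀ t ∈ Icc 1 (1 + b), h t ≤ 0) (hfall : ∀ t ∈ Icc (1 + b) L, h t ≤ -σ) :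
    MonotoneOn (humpUpper μ σ b - U) (Icc 0 L) := by
  have hU' : ∀ t, HasDerivAt (-U) (-h t) t := fun t => (hU t).neg
  rw [← neg_sub_neg]
  refine monotoneOn_Icc_of_monotoneOn_Icc (s := 1 + b) (monotoneOn_Icc_of_monotoneOn_Icc (s := 1)
    (monotoneOn_sub_of_eqOn_affine (c := -μ) (d := 0) hU' (fun t ht => ?_)
      fun t ht => neg_le_neg (hrise t ht))
    (monotoneOn_sub_of_eqOn_affine (c := 0) (d := -μ) hU' (fun t ht => ?_)
      fun t ht => neg_nonneg.2 (hrest t ht)) zero_le_one (by linarith))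
    (monotoneOn_sub_of_eqOn_affine (c := σ) (d := -μ - σ * (1 + b)) hU' (fun t ht => ?_)
      fun t ht => le_neg_of_le_neg (hfall t ht)) (by linarith) hL <;>
    simp only [humpUpper, Pi.neg_apply]
  · rw [min_eq_left ht.2, max_eq_right (by linarith [ht.2])]
    ring
  · rw [min_eq_right ht.1, max_eq_right (by linarith [ht.2])]
    ring
  · rw [min_eq_right (by linarith [ht.1]), max_eq_left (by linarith [ht.1])]
    ring

/-- Profiles of one hump of a solution on `[0, L]`, measured from a zero. With respect to the
informal statement, `b` is `β / σ`. -/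
structure IsHump (μ σ b L : ℝ) (U : ℝ → ℝ) : Prop where
  map_zero : U 0 = 0
  monotoneOn_sub : MonotoneOn (U - humpLower μ σ b) (Icc 0 L)
  monotoneOn_upper_sub : MonotoneOn (humpUpper μ σ b - U) (Icc 0 L)

/-- The parameters for which humps stay above `σ * b` up to time `1 + b` and have a zero in
`[0, L]`. -/
structure IsHumpRange (μ σ b L : ℝ) : Prop where
  speed_pos : 0 < σ
  width_pos : 0 < b
  speed_le : σ ≤ μ
  mul_le : (2 * σ + μ) * b ≤ σ
  le_length : 1 + b + μ / σ ≤ L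

namespace IsHumpRange

variable (h : IsHumpRange μ σ b L)

include h

lemma speed_nonneg : 0 ≤ σ := h.speed_pos.le

lemma two_mul_width_le : 2 * b ≤ 1 := by
  have := mul_pos (h.speed_pos.trans_le h.speed_le) h.width_pos
  have := h.mul_le
  exact le_of_mul_le_mul_left (by linarith) h.speed_pos

lemma one_add_width_lt : 1 + b < L := by
  linarith [h.le_length, div_pos (h.speed_pos.trans_le h.speed_le) h.speed_pos]

lemma mul_min_le_humpLower {t : ℝ} (ht : t ≤ 1 + b) : σ * min b t ≤ humpLower μ σ b t := by
  have hσ := h.speed_nonneg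
  have hb := h.two_mul_width_le
  rw [humpLower]
  rcases le_total t 1 with ht1 | ht1
  · rw [max_eq_right (by linarith), mul_zero, sub_zero]
    exact mul_le_mul_of_nonneg_left
      (le_min (min_le_right _ _) ((min_le_left _ _).trans (by linarith))) hσ
  · rw [max_eq_left (by linarith), min_eq_right (by linarith : 1 - b ≤ t)]
    have := mul_le_mul_of_nonneg_left (min_le_left b t) hσ
    have := mul_le_mul_of_nonneg_left (by linarith : t - 1 ≤ b) (hσ.trans h.speed_le)
    linarith [h.mul_le]

end IsHumpRange

namespace IsHump

lemma congr (hU : IsHump μ σ b L U) (hL : 0 ≤ L) (hV : EqOn V U (Icc 0 L)) :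
    IsHump μ σ b L V where
  map_zero := (hV ⟨le_rfl, hL⟩).trans hU.map_zero
  monotoneOn_sub := hU.monotoneOn_sub.congr fun t ht => by simp only [Pi.sub_apply, hV ht]
  monotoneOn_upper_sub :=
    hU.monotoneOn_upper_sub.congr fun t ht => by simp only [Pi.sub_apply, hV ht]

lemma of_hasDerivAt {h : ℝ → ℝ} (hr : IsHumpRange μ σ b L) (hU0 : U 0 = 0)
    (hU : ∀ t, HasDerivAt U (h t) t) (hμ : ∀ t ∈ Icc 0 L, |h t| ≤ μ)
    (hrise : ∀ t ∈ Icc 0 1, 0 ≤ h t) (hrise' : ∀ t ∈ Icc 0 (1 - b), σ ≤ h t)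
    (hfall : ∀ t ∈ Icc 1 L, h t ≤ 0) (hfall' : ∀ t ∈ Icc (1 + b) L, h t ≤ -σ) :
    IsHump μ σ b L U := by
  have hb := hr.width_pos.le
  have hb' := hr.two_mul_width_le
  have hL := hr.one_add_width_lt.le
  refine ⟨hU0, monotoneOn_sub_humpLower hb (by linarith) (by linarith) hU hrise'
    (fun t ht => hrise t ⟨by linarith [ht.1], ht.2⟩)
    fun t ht => (abs_le.1 (hμ t ⟨by linarith [ht.1], ht.2⟩)).1, ?_⟩
  exact monotoneOn_humpUpper_sub hb hL hU
    (fun t ht => (abs_le.1 (hμ t ⟨ht.1, by linarith [ht.2]⟩)).2)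
    (fun t ht => hfall t ⟨ht.1, by linarith [ht.2]⟩) hfall'

lemma exists_continuous (hr : IsHumpRange μ σ b L) :
    ∃ U, Continuous U ∧ IsHump μ σ b L U := by
  have hσ := hr.speed_nonneg
  have hb := hr.width_pos
  let h : ℝ → ℝ := fun t => σ * max (-1) (min 1 ((1 - t) / b))
  have hderiv : ∀ t, HasDerivAt (fun t => ∫ s in (0 : ℝ)..t, h s) (h t) t := fun t =>
    ((by fun_prop : Continuous h).integral_hasStrictDerivAt 0 t).hasDerivAt
  refine ⟨_, continuous_iff_continuousAt.2 fun t => (hderiv t).continuousAt,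
    of_hasDerivAt hr intervalIntegral.integral_same hderiv (fun t _ => ?_) (fun t ht => ?_)
      (fun t ht => ?_) (fun t ht => ?_) fun t ht => ?_⟩
  · rw [abs_mul, abs_of_nonneg hσ]
    exact (mul_le_of_le_one_right hσ (abs_le.2 ⟨le_max_left _ _,
      max_le (by norm_num) (min_le_left _ _)⟩)).trans hr.speed_le
  · exact mul_nonneg hσ (le_max_of_le_right
      (le_min zero_le_one (div_nonneg (sub_nonneg.2 ht.2) hb.le)))
  · refine le_mul_of_one_le_right hσ (le_max_of_le_right (le_min le_rfl ?_))
    rw [one_le_div hb]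
    linarith [ht.2]
  · exact mul_nonpos_of_nonneg_of_nonpos hσ (max_le (by norm_num)
      (min_le_of_right_le (div_nonpos_of_nonpos_of_nonneg (sub_nonpos.2 ht.1) hb.le)))
  · rw [← mul_neg_one σ]
    refine mul_le_mul_of_nonneg_left (max_le le_rfl (min_le_of_right_le ?_)) hσ
    rw [div_le_iff₀ hb]
    linarith [ht.1]

variable (hU : IsHump μ σ b L U) (hr : IsHumpRange μ σ b L)

include hU hr

lemma humpLower_le {t : ℝ} (ht : t ∈ Icc 0 L) : humpLower μ σ b t ≤ U t := by
  have h := hU.monotoneOn_sub (left_mem_Icc.2 (ht.1.trans ht.2)) ht ht.1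
  simpa [humpLower, hU.map_zero, (by linarith [hr.two_mul_width_le, hr.width_pos] : b ≤ 1)] using h

lemma le_humpUpper {t : ℝ} (ht : t ∈ Icc 0 L) : U t ≤ humpUpper μ σ b t := by
  have h := hU.monotoneOn_upper_sub (left_mem_Icc.2 (ht.1.trans ht.2)) ht ht.1
  simpa [humpUpper, hU.map_zero, (by linarith [hr.width_pos] : -b ≤ 1)] using h

protected lemma monotoneOn : MonotoneOn U (Icc 0 1) := by
  have hL := hr.one_add_width_lt
  have hb := hr.width_pos
  intro s hs t ht hst
  have h := hU.monotoneOn_sub ⟨hs.1, by linarith [hs.2]⟩ ⟨ht.1, by linarith [ht.2]⟩ hst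
  have hlower : humpLower μ σ b s ≤ humpLower μ σ b t := by
    rw [humpLower, humpLower, max_eq_right (sub_nonpos.2 hs.2), max_eq_right (sub_nonpos.2 ht.2)]
    exact sub_le_sub_right
      (mul_le_mul_of_nonneg_left (min_le_min_right _ hst) hr.speed_nonneg) _
  simpa using add_le_add h hlower

protected lemma mul_le {t : ℝ} (ht : t ∈ Icc 0 (1 - b)) : σ * t ≤ U t := by
  have hb := hr.width_pos
  have h := hU.humpLower_le hr ⟨ht.1, by linarith [ht.2, hr.one_add_width_lt]⟩
  rwa [humpLower, min_eq_left ht.2, max_eq_right (by linarith [ht.2]), mul_zero, sub_zero] at h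

protected lemma abs_le {t : ℝ} (ht : t ∈ Icc 0 1) : |U t| ≤ μ := by
  have hb := hr.width_pos
  have h := hU.le_humpUpper hr ⟨ht.1, by linarith [ht.2, hr.one_add_width_lt]⟩
  rw [humpUpper, min_eq_left ht.2, max_eq_right (by linarith [ht.2]), mul_zero, sub_zero] at h
  have hnonneg : 0 ≤ U t :=
    hU.map_zero.symm.trans_le (hU.monotoneOn hr (left_mem_Icc.2 zero_le_one) ht ht.1)
  rw [abs_of_nonneg hnonneg]
  exact h.trans (mul_le_of_le_one_right (hr.speed_nonneg.trans hr.speed_le) ht.2)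

lemma add_mul_sub_le {s t : ℝ} (hs : 1 + b ≤ s) (hst : s ≤ t) (ht : t ≤ L) :
    U t + σ * (t - s) ≤ U s := by
  have hb := hr.width_pos
  have h := hU.monotoneOn_upper_sub ⟨by linarith, hst.trans ht⟩ ⟨by linarith, ht⟩ hst
  simp only [Pi.sub_apply, humpUpper] at h
  rw [min_eq_right (by linarith), min_eq_right (by linarith), max_eq_left (by linarith),
    max_eq_left (by linarith)] at h
  linarith

lemma mul_min_le (hz : z ≤ L) (hUz : U z = 0) {t : ℝ} (ht : t ∈ Icc 0 z) :
    σ * min b (min t (z - t)) ≤ U t := by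
  rcases le_total t (1 + b) with htb | htb
  · calc σ * min b (min t (z - t)) ≤ σ * min b t :=
          mul_le_mul_of_nonneg_left (min_le_min_left _ (min_le_left _ _)) hr.speed_nonneg
      _ ≤ humpLower μ σ b t := hr.mul_min_le_humpLower htb
      _ ≤ U t := hU.humpLower_le hr ⟨ht.1, ht.2.trans hz⟩
  · calc σ * min b (min t (z - t)) ≤ U z + σ * (z - t) := by
          rw [hUz, zero_add]
          exact mul_le_mul_of_nonneg_left ((min_le_right _ _).trans (min_le_right _ _))
            hr.speed_nonneg
      _ ≤ U t := hU.add_mul_sub_le hr htb ht.2 hz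

lemma exists_zero (hcont : Continuous U) : ∃ z ∈ Icc (1 + b) L, U z = 0 := by
  have hL := hr.one_add_width_lt.le
  have hb := hr.width_pos
  have hpos : 0 ≤ U (1 + b) :=
    (mul_nonneg hr.speed_nonneg (le_min hb.le (by linarith))).trans <|
      (hr.mul_min_le_humpLower le_rfl).trans (hU.humpLower_le hr ⟨by linarith, hL⟩)
  have hneg : U L ≤ 0 := by
    have h := hU.le_humpUpper hr ⟨by linarith, le_rfl⟩
    have hlength := (div_le_iff₀ hr.speed_pos).1 (by linarith [hr.le_length] : μ / σ ≤ L - (1 + b))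
    rw [humpUpper, min_eq_right (by linarith), max_eq_left (by linarith)] at h
    linarith
  exact intermediate_value_Icc' hL hcont.continuousOn ⟨hneg, hpos⟩

lemma mul_sub_le_abs (hz : z ≤ L) (hUz : U z = 0) {t : ℝ} (ht : 1 + b ≤ t) :
    σ * (z - t) ≤ |U t| := by
  rcases le_total t z with h | h
  · linarith [hU.add_mul_sub_le hr ht h hz, le_abs_self (U t)]
  · exact (mul_nonpos_of_nonneg_of_nonpos hr.speed_nonneg (sub_nonpos.2 h)).trans (abs_nonneg _)

end IsHump

end Hump

section HumpSet

variable {μ σ b L : ℝ}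

/-- The humps, as a subset of the Banach space of continuous functions on `[0, L]`. -/
def humpSet (μ σ b : ℝ) {L : ℝ} (hL : 0 ≤ L) : Set C(Icc 0 L, ℝ) :=
  {u | IsHump μ σ b L (IccExtend hL u)}

lemma humpSet_eq_setOf_coe_mem_incrementSet (hL : 0 ≤ L) :
    humpSet μ σ b hL = {u : C(Icc 0 L, ℝ) | ⇑u ∈ incrementSet
      (fun t : Icc 0 L => humpLower μ σ b t) (fun t : Icc 0 L => humpUpper μ σ b t)
      ⟨0, left_mem_Icc.2 hL⟩} := by
  ext u
  have hval : ∀ t : Icc 0 L, IccExtend hL u t = u t := fun t => IccExtend_val hL u t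
  have hzero : IccExtend hL u 0 = u ⟨0, left_mem_Icc.2 hL⟩ := hval ⟨0, left_mem_Icc.2 hL⟩
  have hlower : MonotoneOn (IccExtend hL u - humpLower μ σ b) (Icc 0 L) ↔
      Monotone (⇑u - fun t : Icc 0 L => humpLower μ σ b t) := by
    simp only [monotoneOn_iff_monotone, Pi.sub_apply, hval]
    rfl
  have hupper : MonotoneOn (humpUpper μ σ b - IccExtend hL u) (Icc 0 L) ↔
      Monotone ((fun t : Icc 0 L => humpUpper μ σ b t) - ⇑u) := by
    simp only [monotoneOn_iff_monotone, Pi.sub_apply, hval]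
    rfl
  exact ⟨fun h => ⟨hzero ▸ h.map_zero, hlower.1 h.monotoneOn_sub, hupper.1 h.monotoneOn_upper_sub⟩,
    fun h => ⟨hzero.trans h.1, hlower.2 h.2.1, hupper.2 h.2.2⟩⟩

lemma convex_humpSet (hL : 0 ≤ L) : Convex ℝ (humpSet μ σ b hL) := by
  rw [humpSet_eq_setOf_coe_mem_incrementSet]
  exact convex_incrementSet.linear_preimage (ContinuousMap.coeFnLinearMap ℝ (M := ℝ))

lemma isCompact_humpSet (hL : 0 ≤ L) : IsCompact (humpSet μ σ b hL) := by
  rw [humpSet_eq_setOf_coe_mem_incrementSet]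
  exact isCompact_setOf_coe_mem_incrementSet (continuous_humpLower.comp continuous_subtype_val)
    (continuous_humpUpper.comp continuous_subtype_val)

lemma humpSet_nonempty (hr : IsHumpRange μ σ b L) (hL : 0 ≤ L) : (humpSet μ σ b hL).Nonempty := by
  obtain ⟨U, hUcont, hU⟩ := IsHump.exists_continuous hr
  exact ⟨⟨fun t => U t, by fun_prop⟩, hU.congr hL fun t ht => IccExtend_of_mem hL _ ht⟩

lemma exists_continuousOn_zero (hr : IsHumpRange μ σ b L) (hL : 0 ≤ L) :
    ∃ Z : C(Icc 0 L, ℝ) → ℝ, ContinuousOn Z (humpSet μ σ b hL) ∧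
      ∀ u ∈ humpSet μ σ b hL, Z u ∈ Icc (1 + b) L ∧ IccExtend hL u (Z u) = 0 := by
  have hzero : ∀ u ∈ humpSet μ σ b hL, ∃ z, z ∈ Icc (1 + b) L ∧ IccExtend hL u z = 0 :=
    fun u hu => IsHump.exists_zero hu hr u.continuous.Icc_extend'
  choose! Z hZ hUZ using hzero
  have hle : ∀ u ∈ humpSet μ σ b hL, ∀ v ∈ humpSet μ σ b hL, σ * (Z v - Z u) ≤ dist u v := by
    intro u hu v hv
    calc σ * (Z v - Z u) ≤ |IccExtend hL v (Z u)| :=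
          IsHump.mul_sub_le_abs hv hr (hZ v hv).2 (hUZ v hv) (hZ u hu).1
      _ = dist (IccExtend hL u (Z u)) (IccExtend hL v (Z u)) := by
          rw [hUZ u hu, dist_zero_left, Real.norm_eq_abs]
      _ ≤ dist u v := ContinuousMap.dist_apply_le_dist _
  have hlip : LipschitzOnWith (σ⁻¹).toNNReal Z (humpSet μ σ b hL) := by
    refine LipschitzOnWith.of_dist_le_mul fun u hu v hv => ?_
    rw [Real.coe_toNNReal _ (inv_nonneg.2 hr.speed_nonneg), inv_mul_eq_div,
      le_div_iff₀' hr.speed_pos, Real.dist_eq, abs_eq_max_neg, neg_sub,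
      mul_max_of_nonneg _ _ hr.speed_nonneg]
    exact max_le (dist_comm u v ▸ hle v hv u hu) (hle u hu v hv)
  exact ⟨Z, hlip.continuousOn, fun u hu => ⟨hZ u hu, hUZ u hu⟩⟩

end HumpSet

section Feedback

variable {f : ℝ → ℝ} {μ σ b x : ℝ}

/-- The properties of the nonlinearity used by the fixed point argument: negative feedback, the
bound `μ`, and the lower bound `σ` for `|f|` at distance at least `σ * b` from `0`. -/
structure IsBoundedFeedback (f : ℝ → ℝ) (μ σ b : ℝ) : Prop where
  continuous : Continuous f
  mul_neg : ∀ x, x ≠ 0 → x * f x < 0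
  bounds : HypH' f μ (σ * b) σ

namespace IsBoundedFeedback

variable (hf : IsBoundedFeedback f μ σ b)

include hf

lemma reflect : IsBoundedFeedback (reflect f) μ σ b where
  continuous := (hf.continuous.comp continuous_neg).neg
  mul_neg x hx := by
    rw [_root_.reflect, ← neg_mul_comm]
    exact hf.mul_neg (-x) (neg_ne_zero.2 hx)
  bounds := ⟨fun x => (abs_neg _).trans_le (hf.bounds.1 _), fun x hx =>
    (hf.bounds.2 (-x) (by rwa [abs_neg])).trans_eq (abs_neg _).symm⟩

lemma nonpos (hx : 0 ≤ x) : f x ≤ 0 := by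
  have hIoi : Ioi 0 ⊆ {x | f x ≤ 0} := fun y hy =>
    (neg_of_mul_neg_right (hf.mul_neg y (ne_of_gt hy)) (le_of_lt hy)).le
  have hIci := closure_minimal hIoi (isClosed_le hf.continuous continuous_const)
  rw [closure_Ioi] at hIci
  exact hIci hx

lemma le_neg (hσb : 0 ≤ σ * b) (hx : σ * b ≤ x) : f x ≤ -σ := by
  have h := hf.bounds.2 x (hx.trans (le_abs_self x))
  rw [abs_of_nonpos (hf.nonpos (hσb.trans hx))] at h
  exact le_neg_of_le_neg h

lemma nonneg_of_nonpos (hx : x ≤ 0) : 0 ≤ f x := by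
  simpa [_root_.reflect] using hf.reflect.nonpos (neg_nonneg.2 hx)

lemma le_of_le_neg (hσb : 0 ≤ σ * b) (hx : x ≤ -(σ * b)) : σ ≤ f x := by
  simpa [_root_.reflect] using hf.reflect.le_neg hσb (le_neg_of_le_neg hx)

end IsBoundedFeedback

end Feedback

section Step

variable {f : ℝ → ℝ} {μ σ b L z w : ℝ} {u v : ℝ → ℝ}

/-- The slope prescribed by the delay equation for the hump of the sign opposite to `u` that follows
the zero `z` of `u`, where `v` is raised to `σ * min b t` if necessary; this makes the slope at most
`-σ` from time `1 + b` on, whatever `v` is. -/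
noncomputable def humpSlope (f : ℝ → ℝ) (σ b z : ℝ) (u v : ℝ → ℝ) (t : ℝ) : ℝ :=
  -f (waveHistory z u (fun r => max (v r) (σ * min b r)) (t - 1))

lemma humpSlope_of_le_one (hb : 0 ≤ b) (hv : v 0 = 0) {t : ℝ} (ht : t ≤ 1) :
    humpSlope f σ b z u v t = -f (u (z + (t - 1))) := by
  rw [humpSlope, waveHistory_of_nonpos _ (sub_nonpos.2 ht)]
  rw [hv, min_eq_right hb, mul_zero, max_self]

lemma humpSlope_of_one_le (hu : u z = 0) {t : ℝ} (ht : 1 ≤ t) :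
    humpSlope f σ b z u v t = -f (-max (v (t - 1)) (σ * min b (t - 1))) := by
  rw [humpSlope, waveHistory_of_nonneg hu (sub_nonneg.2 ht)]

lemma continuous_humpSlope (hf : Continuous f) (hu : Continuous u) (hv : Continuous v) :
    Continuous (humpSlope f σ b z u v) := by
  unfold humpSlope waveHistory
  fun_prop

lemma isHump_integral_humpSlope (hf : IsBoundedFeedback f μ σ b) (hr : IsHumpRange μ σ b L)
    (hu : IsHump μ σ b L u) (hucont : Continuous u) (hv0 : v 0 = 0) (hvcont : Continuous v)
    (hz : z ∈ Icc (1 + b) L) (huz : u z = 0) :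
    IsHump μ σ b L (fun t => ∫ s in (0 : ℝ)..t, humpSlope f σ b z u v s) := by
  have hb := hr.width_pos
  have hσb := (mul_pos hr.speed_pos hb).le
  have hslope := continuous_humpSlope (σ := σ) (b := b) (z := z) hf.continuous hucont hvcont
  have hhist : ∀ t ∈ Icc 0 1, σ * min b (1 - t) ≤ u (z + (t - 1)) := fun t ht => by
    have h := hu.mul_min_le hr hz.2 huz (t := z + (t - 1))
      ⟨by linarith [ht.1, hz.1], by linarith [ht.2]⟩
    rwa [min_left_comm, min_eq_right, sub_add_cancel_left, neg_sub] at h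
    exact (min_le_left _ _).trans (by linarith [ht.1, hz.1])
  refine IsHump.of_hasDerivAt hr intervalIntegral.integral_same
    (fun t => (hslope.integral_hasStrictDerivAt 0 t).hasDerivAt)
    (fun t _ => (abs_neg _).trans_le (hf.bounds.1 _)) (fun t ht => ?_) (fun t ht => ?_)
    (fun t ht => ?_) fun t ht => ?_
  · rw [humpSlope_of_le_one hb.le hv0 ht.2, neg_nonneg]
    exact hf.nonpos ((mul_nonneg hr.speed_nonneg (le_min hb.le (sub_nonneg.2 ht.2))).trans
      (hhist t ht))
  · rw [humpSlope_of_le_one hb.le hv0 (by linarith [ht.2])]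
    refine le_neg_of_le_neg (hf.le_neg hσb ?_)
    have h := hhist t ⟨ht.1, by linarith [ht.2]⟩
    rwa [min_eq_left (by linarith [ht.2])] at h
  · rw [humpSlope_of_one_le huz ht.1, neg_nonpos]
    exact hf.nonneg_of_nonpos (neg_nonpos.2 (le_max_of_le_right
      (mul_nonneg hr.speed_nonneg (le_min hb.le (sub_nonneg.2 ht.1)))))
  · rw [humpSlope_of_one_le huz (by linarith [ht.1])]
    refine neg_le_neg (hf.le_of_le_neg hσb (neg_le_neg (le_max_of_le_right ?_)))
    rw [min_eq_left (by linarith [ht.1])]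

lemma humpSlope_eq_of_isHump (hr : IsHumpRange μ σ b L) (huz : u z = 0)
    (hv : IsHump μ σ b L v) (hw : w ∈ Icc (1 + b) L) (hvw : v w = 0) {t : ℝ} (ht : t ∈ Ico 0 w) :
    humpSlope f σ b z u v t = -f (waveHistory z u v (t - 1)) := by
  have hb := hr.width_pos
  rcases le_total t 1 with h | h
  · rw [humpSlope_of_le_one hb.le hv.map_zero h, waveHistory_of_nonpos hv.map_zero (by linarith)]
  · have hcut : σ * min b (t - 1) ≤ v (t - 1) := by
      have hmin := hv.mul_min_le hr hw.2 hvw (t := t - 1) ⟨by linarith, by linarith [ht.2]⟩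
      refine (mul_le_mul_of_nonneg_left (le_min (min_le_left _ _) (le_min (min_le_right _ _) ?_))
        hr.speed_nonneg).trans hmin
      exact (min_le_left _ _).trans (by linarith [ht.2, hr.two_mul_width_le])
    rw [humpSlope_of_one_le huz h, max_eq_left hcut, waveHistory_of_nonneg huz (by linarith)]

lemma isHalfWave_of_isHump (hf : IsBoundedFeedback f μ σ b) (hr : IsHumpRange μ σ b L)
    (hucont : Continuous u) (huz : u z = 0) (hv : IsHump μ σ b L v) (hvcont : Continuous v)
    (hw : w ∈ Icc (1 + b) L) (hvw : v w = 0)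
    (hprim : ∀ t ∈ Icc 0 L, v t = ∫ s in (0 : ℝ)..t, humpSlope f σ b z u v s) :
    IsHalfWave f z u w v where
  one_lt := by linarith [hw.1, hr.width_pos]
  continuous := hvcont
  map_zero := hv.map_zero
  map_end := hvw
  pos t ht := (mul_pos hr.speed_pos (lt_min hr.width_pos (lt_min ht.1 (sub_pos.2 ht.2)))).trans_le
    (hv.mul_min_le hr hw.2 hvw (Ioo_subset_Icc_self ht))
  hasDerivWithinAt t ht := by
    rw [← humpSlope_eq_of_isHump hr huz hv hw hvw ht]
    have hslope := continuous_humpSlope (σ := σ) (b := b) (z := z) hf.continuous hucont hvcont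
    have hderiv := (hslope.integral_hasStrictDerivAt 0 t).hasDerivAt.hasDerivWithinAt (s := Ici t)
    refine hderiv.congr_of_eventuallyEq ?_ (hprim t ⟨ht.1, ht.2.le.trans hw.2⟩)
    filter_upwards [Ico_mem_nhdsGE (ht.2.trans_le hw.2)] with s hs
    exact hprim s ⟨ht.1.trans hs.1, hs.2.le⟩

end Step

section FixedPoint

variable {f : ℝ → ℝ} {μ σ b L : ℝ}

lemma continuous_integral_humpSlope_IccExtend (hf : Continuous f) (hL : 0 ≤ L) :
    Continuous fun q : (ℝ × C(Icc 0 L, ℝ) × C(Icc 0 L, ℝ)) × ℝ => ∫ s in (0 : ℝ)..q.2,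
      humpSlope f σ b q.1.1 (IccExtend hL q.1.2.1) (IccExtend hL q.1.2.2) s := by
  have heval : Continuous fun r : C(Icc 0 L, ℝ) × ℝ => IccExtend hL r.1 r.2 :=
    continuous_fst.eval (continuous_projIcc.comp continuous_snd)
  have hu : Continuous fun q : (ℝ × C(Icc 0 L, ℝ) × C(Icc 0 L, ℝ)) × ℝ =>
      IccExtend hL q.1.2.1 (q.1.1 + min (q.2 - 1) 0) :=
    heval.comp (by fun_prop : Continuous fun q : (ℝ × C(Icc 0 L, ℝ) × C(Icc 0 L, ℝ)) × ℝ =>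
      (q.1.2.1, q.1.1 + min (q.2 - 1) 0))
  have hv : Continuous fun q : (ℝ × C(Icc 0 L, ℝ) × C(Icc 0 L, ℝ)) × ℝ =>
      IccExtend hL q.1.2.2 (max (q.2 - 1) 0) :=
    heval.comp (by fun_prop : Continuous fun q : (ℝ × C(Icc 0 L, ℝ) × C(Icc 0 L, ℝ)) × ℝ =>
      (q.1.2.2, max (q.2 - 1) 0))
  refine intervalIntegral.continuous_parametric_primitive_of_continuous
    (μ := MeasureTheory.volume) (a₀ := 0) (f := fun (x : ℝ × C(Icc 0 L, ℝ) × C(Icc 0 L, ℝ)) s =>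
      humpSlope f σ b x.1 (IccExtend hL x.2.1) (IccExtend hL x.2.2) s) ?_
  exact (hf.comp (hu.sub (hv.max (by fun_prop)))).neg

/-- The fixed point operator on `C([0, L])`: the negative half-wave prescribed by `humpSlope` after
the zero `z` of `u`, counted positively and restricted to `[0, L]`. -/
noncomputable def nextHump (σ b : ℝ) (hf : Continuous f) (hL : 0 ≤ L)
    (x : ℝ × C(Icc 0 L, ℝ) × C(Icc 0 L, ℝ)) : C(Icc 0 L, ℝ) where
  toFun t := ∫ s in (0 : ℝ)..t, humpSlope f σ b x.1 (IccExtend hL x.2.1) (IccExtend hL x.2.2) s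
  continuous_toFun := (continuous_integral_humpSlope_IccExtend hf hL).comp
    (continuous_const.prodMk continuous_subtype_val)

lemma continuous_nextHump (hf : Continuous f) (hL : 0 ≤ L) :
    Continuous (nextHump σ b hf hL) :=
  ContinuousMap.continuous_of_continuous_uncurry _
    ((continuous_integral_humpSlope_IccExtend hf hL).comp
      (continuous_fst.prodMk (continuous_subtype_val.comp continuous_snd)))

lemma eqOn_IccExtend_nextHump (hf : Continuous f) (hL : 0 ≤ L) (z : ℝ) (u v : C(Icc 0 L, ℝ)) :
    EqOn (IccExtend hL (nextHump σ b hf hL (z, u, v)))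
      (fun t => ∫ s in (0 : ℝ)..t, humpSlope f σ b z (IccExtend hL u) (IccExtend hL v) s)
      (Icc 0 L) :=
  fun _ ht => IccExtend_of_mem hL _ ht

lemma nextHump_mem_humpSet (hf : IsBoundedFeedback f μ σ b) (hr : IsHumpRange μ σ b L)
    (hL : 0 ≤ L) {z : ℝ} {u v : C(Icc 0 L, ℝ)} (hu : u ∈ humpSet μ σ b hL)
    (hv : v ∈ humpSet μ σ b hL) (hz : z ∈ Icc (1 + b) L ∧ IccExtend hL u z = 0) :
    nextHump σ b hf.continuous hL (z, u, v) ∈ humpSet μ σ b hL :=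
  (isHump_integral_humpSlope hf hr hu u.continuous.Icc_extend' hv.map_zero
    v.continuous.Icc_extend' hz.1 hz.2).congr hL (eqOn_IccExtend_nextHump hf.continuous hL z u v)

lemma isHalfWave_of_nextHump_eq (hf : IsBoundedFeedback f μ σ b) (hr : IsHumpRange μ σ b L)
    (hL : 0 ≤ L) {z w : ℝ} {u v : C(Icc 0 L, ℝ)} (hv : v ∈ humpSet μ σ b hL)
    (huz : IccExtend hL u z = 0) (hw : w ∈ Icc (1 + b) L ∧ IccExtend hL v w = 0)
    (hfix : nextHump σ b hf.continuous hL (z, u, v) = v) :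
    IsHalfWave f z (IccExtend hL u) w (IccExtend hL v) := by
  refine isHalfWave_of_isHump hf hr u.continuous.Icc_extend' huz hv v.continuous.Icc_extend'
    hw.1 hw.2 fun t ht => ?_
  have hprim := eqOn_IccExtend_nextHump (σ := σ) (b := b) hf.continuous hL z u v ht
  rwa [hfix] at hprim

lemma exists_isSOP_isHump (hf : IsBoundedFeedback f μ σ b) (hr : IsHumpRange μ σ b L) :
    ∃ p U, IsSOP f p ∧ IsHump μ σ b L U ∧ EqOn p U (Icc 0 1) := by
  have hb := hr.width_pos
  have hL : 0 ≤ L := by linarith [hr.one_add_width_lt]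
  obtain ⟨Z, hZ, hzero⟩ := exists_continuousOn_zero hr hL
  let S := humpSet μ σ b hL
  let F : C(Icc 0 L, ℝ) × C(Icc 0 L, ℝ) → C(Icc 0 L, ℝ) × C(Icc 0 L, ℝ) := fun q =>
    (nextHump σ b hf.reflect.continuous hL (Z q.2, q.2, q.1),
      nextHump σ b hf.continuous hL (Z q.1, q.1, q.2))
  have hF : ContinuousOn F (S ×ˢ S) := by
    have h₁ : ContinuousOn (fun q : C(Icc 0 L, ℝ) × C(Icc 0 L, ℝ) => Z q.1) (S ×ˢ S) :=
      hZ.comp continuousOn_fst fun _ hq => hq.1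
    have h₂ : ContinuousOn (fun q : C(Icc 0 L, ℝ) × C(Icc 0 L, ℝ) => Z q.2) (S ×ˢ S) :=
      hZ.comp continuousOn_snd fun _ hq => hq.2
    exact ((continuous_nextHump _ hL).comp_continuousOn
      (h₂.prodMk (continuousOn_snd.prodMk continuousOn_fst))).prodMk
      ((continuous_nextHump _ hL).comp_continuousOn
        (h₁.prodMk (continuousOn_fst.prodMk continuousOn_snd)))
  have hmaps : MapsTo F (S ×ˢ S) (S ×ˢ S) := fun q hq =>
    ⟨nextHump_mem_humpSet hf.reflect hr hL hq.2 hq.1 (hzero _ hq.2),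
      nextHump_mem_humpSet hf hr hL hq.1 hq.2 (hzero _ hq.1)⟩
  have hcompact : IsCompact S := isCompact_humpSet hL
  have hconv : Convex ℝ S := convex_humpSet hL
  have hne : S.Nonempty := humpSet_nonempty hr hL
  obtain ⟨⟨u, v⟩, ⟨hu, hv⟩, hfix⟩ := exists_isFixedPt_of_isCompact_of_convex
    (hcompact.prod hcompact) (hconv.prod hconv) (hne.prod hne) hF hmaps
  obtain ⟨hfixu, hfixv⟩ := Prod.ext_iff.1 hfix
  have hzu := hzero u hu
  have hzv := hzero v hv
  obtain ⟨p, hp, hpu⟩ := exists_isSOP_of_isHalfWave hf.continuous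
    (isHalfWave_of_nextHump_eq hf hr hL hv hzu.2 hzv hfixv)
    (isHalfWave_of_nextHump_eq hf.reflect hr hL hu hzv.2 hzu hfixu)
  exact ⟨p, IccExtend hL u, hp, hu, hpu.mono (Icc_subset_Icc_right (by linarith [hzu.1.1]))⟩

end FixedPoint

section PeriodicSolution

variable {f : ℝ → ℝ} {μ β σ b L : ℝ}

lemma isHumpRange_of_le_div (hβ : 0 < β) (hσ : 0 < σ) (hf : HypH' f μ β σ)
    (hβσ : β ≤ σ / (2 + μ / σ)) : IsHumpRange μ σ (β / σ) (1 + β / σ + μ / σ) where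
  speed_pos := hσ
  width_pos := div_pos hβ hσ
  speed_le := (hf.2 β (le_abs_self β)).trans (hf.1 β)
  mul_le := by
    have hμ : 0 ≤ μ := (abs_nonneg _).trans (hf.1 0)
    calc (2 * σ + μ) * (β / σ) = β * (2 + μ / σ) := by field_simp
      _ ≤ σ := (le_div_iff₀ (by positivity)).1 hβσ
  le_length := le_rfl

lemma IsHump.memK {U : ℝ → ℝ} (hU : IsHump μ σ b L U) (hr : IsHumpRange μ σ b L)
    {φ : ℝ → ℝ} (hφ : ContinuousOn φ (Icc (-1) 0)) (hφU : ∀ s ∈ Icc (-1) 0, φ s = U (1 + s)) :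
    MemK μ φ := by
  have hshift : ∀ s ∈ Icc (-1 : ℝ) 0, 1 + s ∈ Icc (0 : ℝ) 1 := fun s hs =>
    ⟨by linarith [hs.1], by linarith [hs.2]⟩
  refine ⟨hφ, ?_, fun s hs t ht hst => ?_, fun s hs => ?_⟩
  · rw [hφU _ (by norm_num), add_neg_cancel, hU.map_zero]
  · rw [hφU s hs, hφU t ht]
    exact hU.monotoneOn hr (hshift s hs) (hshift t ht) (by linarith)
  · rw [hφU s hs]
    exact hU.abs_le hr (hshift s hs)

theorem statement_8_general (hcont : Continuous f) (hneg : ∀ x, x ≠ 0 → x * f x < 0)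
    (hf : HypH' f μ β σ) (hβ : 0 < β) (hσ : 0 < σ) (hβσ : β ≤ σ / (2 + μ / σ)) :
    ∃ (p : ℝ → ℝ) (z : ℝ), IsSOP f p ∧ p z = 0 ∧ MemK μ (fun s => p (z + 1 + s)) ∧
      ∀ s ∈ Icc (-1) (-(β / σ)), σ * (s + 1) ≤ p (z + 1 + s) := by
  have hr := isHumpRange_of_le_div hβ hσ hf hβσ
  obtain ⟨p, U, hp, hU, hpU⟩ := exists_isSOP_isHump
    ⟨hcont, hneg, by rwa [mul_div_cancel₀ β hσ.ne']⟩ hr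
  have hpcont : Continuous p := continuous_iff_continuousAt.2 fun t => (hp.1 t).continuousAt
  have hsegment : ∀ s ∈ Icc (-1) 0, p (0 + 1 + s) = U (1 + s) := fun s hs => by
    rw [zero_add, hpU ⟨by linarith [hs.1], by linarith [hs.2]⟩]
  have hp0 : p 0 = 0 := (hpU ⟨le_rfl, zero_le_one⟩).trans hU.map_zero
  refine ⟨p, 0, hp, hp0, hU.memK hr (by fun_prop) hsegment, fun s hs => ?_⟩
  rw [hsegment s ⟨hs.1, hs.2.trans (neg_nonpos.2 hr.width_pos.le)⟩, add_comm s]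
  exact hU.mul_le hr ⟨by linarith [hs.1], by linarith [hs.2]⟩

end PeriodicSolution

theorem statement_8 (f : ℝ → ℝ) (μ β σ : ℝ) (hμ : 0 < μ) (hβ : 0 < β) (hσ : 0 < σ)
    (hH : HypH f) (hH' : HypH' f μ β σ) (hβσ : β < σ / (2 + μ / σ))
    (γ : ℝ) (hγ : 0 < γ) (hγ1 : γ + β / σ < 1)
    (hγ2 : β ≤ (σ - (σ + μ) * γ) / (2 + μ / σ)) :
    ∃ (p : ℝ → ℝ) (z : ℝ), IsSOP f p ∧ p z = 0 ∧
      MemK μ (fun s => p (z + 1 + s)) ∧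
      ∀ s ∈ Icc (-1 + γ) (-(β / σ)), σ * s + σ * (1 - γ) < p (z + 1 + s) := by
  obtain ⟨p, z, hp, hz, hK, hrise⟩ := statement_8_general hH.1 hH.2.1 hH' hβ hσ hβσ.le
  exact ⟨p, z, hp, hz, hK, fun s hs => by
    linarith [hrise s ⟨by linarith [hs.1], hs.2⟩, mul_pos hσ hγ]⟩
end

section
/- Suppose f satisfies (H) and is bounded above by M > 0, and suppose there is ε > 0 such that f is differentiable on [-ε, ε] with |f'(ξ)| < 1 for all ξ ∈ [-ε, ε]. Let x be a solution on [-1,∞) of x'(t) = f(x(t-1)) whose initial segment φ belongs to K, with 0 < sup_{s}|φ(s)| ≤ ε. If x has at least two positive zeros and z₁ < z₂ denote the first two, then sup_{t ∈ [z₂, z₂+1]} |x(t)| < sup_{s ∈ [-1,0]} |φ(s)|. -/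
open Set Filter

/-!
Let `S = sup |φ|`. Since `f 0 = 0` and `|f'| < 1`, the mean value theorem shows that `f` maps
`[-S, S]` into `(-S, S)`. If `x a = 0` and `|x| ≤ S` on `[a - 1, t - 1]` with `t ∈ [a, a + 1]`, the
mean value theorem writes `x t` as `t - a` times a value of `f` on `[-S, S]`, whence `|x t| < S`.
On the other hand, as long as `x` keeps the sign it had one unit of time earlier, negative feedback
makes `|x|` nonincreasing. Looking back from `t` to the last zero of `x`, or to time `0` if there is
none (`φ` has the sign of `x 0`), these two facts propagate `|x| ≤ S` from one unit interval to the
next. The first fact then gives `|x| < S` on `[z, z + 1]` for *every* zero `z ≥ 0`.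
-/

theorem mul_pos_of_forall_ne_zero {g : ℝ → ℝ} {s : Set ℝ} (hs : s.OrdConnected)
    (hg : ContinuousOn g s) (hne : ∀ t ∈ s, g t ≠ 0) {a b : ℝ} (ha : a ∈ s) (hb : b ∈ s) :
    0 < g a * g b := by
  by_contra! hab
  have hsub : uIcc a b ⊆ s := hs.uIcc_subset ha hb
  have hzero : (0 : ℝ) ∈ uIcc (g a) (g b) := by
    rcases mul_nonpos_iff.mp hab with h | h
    · exact mem_uIcc.mpr (Or.inr h.symm)
    · exact mem_uIcc.mpr (Or.inl h)
  obtain ⟨c, hc, hgc⟩ := intermediate_value_uIcc (hg.mono hsub) hzero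
  exact hne c (hsub hc) hgc

theorem exists_last_zero {g : ℝ → ℝ} {a b : ℝ} (hg : ContinuousOn g (Icc a b))
    (hzero : ∃ s ∈ Icc a b, g s = 0) :
    ∃ c ∈ Icc a b, g c = 0 ∧ ∀ s ∈ Ioc c b, g s ≠ 0 := by
  have hclosed : IsClosed (Icc a b ∩ g ⁻¹' {0}) :=
    hg.preimage_isClosed_of_isClosed isClosed_Icc isClosed_singleton
  obtain ⟨c, ⟨hcab, hgc⟩, hmax⟩ :=
    (isCompact_Icc.of_isClosed_subset hclosed inter_subset_left).exists_isGreatest hzero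
  exact ⟨c, hcab, hgc, fun s hs hgs => hs.1.not_ge (hmax ⟨⟨hcab.1.trans hs.1.le, hs.2⟩, hgs⟩)⟩

theorem abs_sub_lt_of_hasDerivWithinAt_abs_lt {g : ℝ → ℝ} {s : Set ℝ} (hs : s.OrdConnected) {C : ℝ}
    (hg : ∀ ξ ∈ s, ∃ d, HasDerivWithinAt g d s ξ ∧ |d| < C) {y z : ℝ} (hy : y ∈ s) (hz : z ∈ s)
    (hyz : y ≠ z) : |g y - g z| < C * |y - z| := by
  wlog hlt : z < y generalizing y z
  · rw [abs_sub_comm (g y), abs_sub_comm y]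
    exact this hz hy hyz.symm (hyz.lt_of_le (not_lt.mp hlt))
  choose! g' hg' hC using hg
  have hsub : Icc z y ⊆ s := hs.out hz hy
  obtain ⟨c, hc, hslope⟩ := exists_hasDerivAt_eq_slope g g' hlt
    (fun ξ hξ => ((hg' ξ (hsub hξ)).continuousWithinAt).mono hsub)
    (fun ξ hξ => (hg' ξ (hsub (Ioo_subset_Icc_self hξ))).hasDerivAt
      (mem_of_superset (Icc_mem_nhds hξ.1 hξ.2) hsub))
  have hpos : 0 < y - z := sub_pos.mpr hlt
  rw [← (eq_div_iff hpos.ne').mp hslope, abs_mul]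
  exact mul_lt_mul_of_pos_right (hC c (hsub (Ioo_subset_Icc_self hc))) (abs_pos.mpr hpos.ne')

theorem abs_apply_lt_of_abs_le {f : ℝ → ℝ} {ε S y : ℝ} (hf0 : f 0 = 0)
    (hderiv : ∀ ξ ∈ Icc (-ε) ε, ∃ d, HasDerivWithinAt f d (Icc (-ε) ε) ξ ∧ |d| < 1)
    (hS : 0 < S) (hSε : S ≤ ε) (hy : |y| ≤ S) : |f y| < S := by
  rcases eq_or_ne y 0 with rfl | hy0
  · simpa only [hf0, abs_zero] using hS
  have hyε : y ∈ Icc (-ε) ε := abs_le.mp (hy.trans hSε)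
  have h0ε : (0 : ℝ) ∈ Icc (-ε) ε := ⟨by linarith, by linarith⟩
  have hlt : |f y| < |y| := by
    simpa only [hf0, sub_zero, one_mul] using
      abs_sub_lt_of_hasDerivWithinAt_abs_lt ordConnected_Icc hderiv hyε h0ε hy0
  exact hlt.trans_le hy

theorem mul_nonneg_trans {a b c : ℝ} (hb : b ≠ 0) (hab : 0 ≤ a * b) (hbc : 0 ≤ b * c) :
    0 ≤ a * c := by
  have hprod : 0 ≤ a * c * b ^ 2 :=
    calc 0 ≤ a * b * (b * c) := mul_nonneg hab hbc
      _ = a * c * b ^ 2 := by ring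
  exact nonneg_of_mul_nonneg_left hprod (by positivity)

theorem mul_apply_nonpos_of_mul_nonneg {f : ℝ → ℝ} {y z : ℝ} (hf0 : f 0 = 0)
    (hneg : z * f z ≤ 0) (hyz : 0 ≤ y * z) : y * f z ≤ 0 := by
  rcases eq_or_ne z 0 with rfl | hz
  · rw [hf0, mul_zero]
  have hprod : y * f z * z ^ 2 ≤ 0 :=
    calc y * f z * z ^ 2 = y * z * (z * f z) := by ring
      _ ≤ 0 := mul_nonpos_of_nonneg_of_nonpos hyz hneg
  exact nonpos_of_mul_nonpos_left hprod (by positivity)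

namespace HypH

variable {f : ℝ → ℝ}

theorem apply_zero (hf : HypH f) : f 0 = 0 := by
  obtain ⟨hcont, hneg, -, -⟩ := hf
  have hright : Ici 0 ⊆ {y | f y ≤ 0} := by
    rw [← closure_Ioi]
    refine closure_minimal (fun y (hy : 0 < y) => ?_) (isClosed_le hcont continuous_const)
    exact (neg_of_mul_neg_right (hneg y hy.ne') hy.le).le
  have hleft : Iic 0 ⊆ {y | 0 ≤ f y} := by
    rw [← closure_Iio]
    refine closure_minimal (fun y (hy : y < 0) => ?_) (isClosed_le continuous_const hcont)
    exact (pos_of_mul_neg_right (hneg y hy.ne) hy.le).le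
  exact le_antisymm (hright self_mem_Ici) (hleft self_mem_Iic)

theorem mul_apply_nonpos (hf : HypH f) (y : ℝ) : y * f y ≤ 0 := by
  rcases eq_or_ne y 0 with rfl | hy
  · rw [zero_mul]
  · exact (hf.2.1 y hy).le

end HypH

namespace MemK

variable {M : ℝ} {φ : ℝ → ℝ}

theorem nonneg (hφ : MemK M φ) : ∀ s ∈ Icc (-1 : ℝ) 0, 0 ≤ φ s := fun _ hs =>
  hφ.2.1 ▸ hφ.2.2.1 (left_mem_Icc.mpr (by norm_num)) hs hs.1

theorem abs_le_apply_zero (hφ : MemK M φ) : ∀ s ∈ Icc (-1 : ℝ) 0, |φ s| ≤ φ 0 := fun s hs => by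
  rw [abs_of_nonneg (hφ.nonneg s hs)]
  exact hφ.2.2.1 hs (right_mem_Icc.mpr (by norm_num)) hs.2

theorem apply_zero_mul_nonneg (hφ : MemK M φ) : ∀ s ∈ Icc (-1 : ℝ) 0, 0 ≤ φ 0 * φ s :=
  fun s hs => mul_nonneg (hφ.nonneg 0 (by norm_num)) (hφ.nonneg s hs)

theorem apply_zero_pos (hφ : MemK M φ) (hne : ∃ s ∈ Icc (-1 : ℝ) 0, φ s ≠ 0) : 0 < φ 0 := by
  obtain ⟨s, hs, hs0⟩ := hne
  exact (abs_pos.mpr hs0).trans_le (hφ.abs_le_apply_zero s hs)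

theorem sSup_abs_eq (hφ : MemK M φ) : sSup ((fun s => |φ s|) '' Icc (-1 : ℝ) 0) = φ 0 := by
  have h0 : (0 : ℝ) ∈ Icc (-1 : ℝ) 0 := by norm_num
  refine IsGreatest.csSup_eq ⟨⟨0, h0, abs_of_nonneg (hφ.nonneg 0 h0)⟩, ?_⟩
  rintro _ ⟨s, hs, rfl⟩
  exact hφ.abs_le_apply_zero s hs

end MemK

namespace IsSolOn

variable {f x : ℝ → ℝ} {S a b t : ℝ}

theorem continuousOn_Icc (hx : IsSolOn f x) (ha : 0 ≤ a) : ContinuousOn x (Icc a b) :=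
  hx.1.mono fun _ ht => mem_Ici.mpr (by linarith [ht.1])

theorem exists_sub_eq_mul (hx : IsSolOn f x) (ha : 0 ≤ a) (hab : a < b) :
    ∃ c ∈ Ioo (a - 1) (b - 1), x b - x a = f (x c) * (b - a) := by
  obtain ⟨c, hc, hslope⟩ := exists_hasDerivAt_eq_slope x (fun t => f (x (t - 1))) hab
    (hx.continuousOn_Icc ha) (fun t ht => hx.2 t (ha.trans_lt ht.1))
  exact ⟨c - 1, ⟨by linarith [hc.1], by linarith [hc.2]⟩,
    ((eq_div_iff (sub_pos.mpr hab).ne').mp hslope).symm⟩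

theorem abs_lt_of_apply_eq_zero (hx : IsSolOn f x) (hfS : ∀ y, |y| ≤ S → |f y| < S)
    (ha : 0 ≤ a) (hxa : x a = 0) (ht : t ∈ Icc a (a + 1))
    (hS : ∀ s ∈ Icc (a - 1) (t - 1), |x s| ≤ S) : |x t| < S := by
  rcases ht.1.eq_or_lt with rfl | hat
  · rw [hxa, abs_zero]
    exact (abs_nonneg _).trans_lt (hfS _ (hS _ (left_mem_Icc.mpr le_rfl)))
  obtain ⟨c, hc, hxc⟩ := hx.exists_sub_eq_mul ha hat
  calc |x t| = |f (x c)| * (t - a) := by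
        rw [← abs_of_pos (sub_pos.mpr hat), ← abs_mul, ← hxc, hxa, sub_zero]
    _ ≤ |f (x c)| := mul_le_of_le_one_right (abs_nonneg _) (by linarith [ht.2])
    _ < S := hfS _ (hS c (Ioo_subset_Icc_self hc))

theorem abs_le_abs_of_mul_nonpos (hx : IsSolOn f x) (ha : 0 ≤ a) (hab : a ≤ b)
    (h : ∀ t ∈ Ioo a b, x t * f (x (t - 1)) ≤ 0) : |x b| ≤ |x a| := by
  -- Unlike `|x|`, the square is differentiable, so no case split on the sign of `x` is needed.
  have hanti : AntitoneOn (fun t => x t ^ 2) (Icc a b) := by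
    refine antitoneOn_of_hasDerivWithinAt_nonpos (convex_Icc a b)
      (f' := fun t => 2 * (x t * f (x (t - 1)))) ((hx.continuousOn_Icc ha).pow 2)
      (fun t ht => ?_) (fun t ht => ?_) <;> rw [interior_Icc] at *
    · exact ((hx.2 t (ha.trans_lt ht.1)).pow 2).hasDerivWithinAt.congr_deriv (by norm_num; ring)
    · linarith [h t ht]
  exact sq_le_sq.mp (hanti (left_mem_Icc.mpr hab) (right_mem_Icc.mpr hab) hab)

theorem abs_le_abs_of_mul_nonneg (hx : IsSolOn f x) (hf0 : f 0 = 0)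
    (hneg : ∀ s ∈ Icc (a - 1) (b - 1), x s * f (x s) ≤ 0) (ha : 0 ≤ a) (hab : a ≤ b)
    (hsign : ∀ s ∈ Ioo (a - 1) b, 0 ≤ x b * x s) : |x b| ≤ |x a| := by
  rcases eq_or_ne (x b) 0 with hb | hb
  · rw [hb, abs_zero]
    exact abs_nonneg _
  refine hx.abs_le_abs_of_mul_nonpos ha hab fun t ht => ?_
  have ht_sign : 0 ≤ x t * x b := mul_comm (x b) (x t) ▸ hsign t ⟨by linarith [ht.1], ht.2⟩
  have hdelay_sign : 0 ≤ x b * x (t - 1) := hsign (t - 1) ⟨by linarith [ht.1], by linarith [ht.2]⟩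
  have hsame : 0 ≤ x t * x (t - 1) := mul_nonneg_trans hb ht_sign hdelay_sign
  exact mul_apply_nonpos_of_mul_nonneg hf0
    (hneg (t - 1) ⟨by linarith [ht.1], by linarith [ht.2]⟩) hsame

theorem abs_le_abs_apply_zero_of_forall_ne_zero (hx : IsSolOn f x) (hf0 : f 0 = 0)
    (hneg : ∀ s ∈ Icc (-1) (t - 1), x s * f (x s) ≤ 0)
    (hsign : ∀ s ∈ Icc (-1 : ℝ) 0, 0 ≤ x 0 * x s) (ht : 0 ≤ t) (hne : ∀ s ∈ Icc 0 t, x s ≠ 0) :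
    |x t| ≤ |x 0| := by
  have h0t : (0 : ℝ) ∈ Icc 0 t := left_mem_Icc.mpr ht
  have hpos : ∀ s ∈ Icc 0 t, 0 < x t * x s := fun s hs =>
    mul_pos_of_forall_ne_zero ordConnected_Icc (hx.continuousOn_Icc le_rfl) hne
      (right_mem_Icc.mpr ht) hs
  refine hx.abs_le_abs_of_mul_nonneg hf0 (by simpa only [zero_sub] using hneg) le_rfl ht
    fun s hs => ?_
  rw [zero_sub] at hs
  rcases le_total s 0 with hs0 | hs0
  · exact mul_nonneg_trans (hne 0 h0t) (hpos 0 h0t).le (hsign s ⟨hs.1.le, hs0⟩)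
  · exact (hpos s ⟨hs0, hs.2.le⟩).le

theorem abs_le_of_last_zero (hx : IsSolOn f x) (hf0 : f 0 = 0)
    (hneg : ∀ y, |y| ≤ S → y * f y ≤ 0) (hfS : ∀ y, |y| ≤ S → |f y| < S)
    (ha : 0 ≤ a) (hat : a ≤ t) (hxa : x a = 0) (hne : ∀ s ∈ Ioc a t, x s ≠ 0)
    (hS : ∀ s ∈ Icc (a - 1) (t - 1), |x s| ≤ S) : |x t| ≤ S := by
  rcases le_total t (a + 1) with ht | ht
  · exact (hx.abs_lt_of_apply_eq_zero hfS ha hxa ⟨hat, ht⟩ hS).le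
  have hcont : ContinuousOn x (Ioc a t) := (hx.continuousOn_Icc ha).mono Ioc_subset_Icc_self
  calc |x t| ≤ |x (a + 1)| := by
        refine hx.abs_le_abs_of_mul_nonneg hf0
          (fun s hs => hneg _ (hS s ⟨by linarith [hs.1], hs.2⟩)) (by linarith) ht fun s hs => ?_
        rw [add_sub_cancel_right] at hs
        exact (mul_pos_of_forall_ne_zero ordConnected_Ioc hcont hne ⟨by linarith, le_rfl⟩
          (Ioo_subset_Ioc_self hs)).le
    _ ≤ S := (hx.abs_lt_of_apply_eq_zero hfS ha hxa ⟨by linarith, le_rfl⟩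
        fun s hs => hS s ⟨hs.1, by linarith [hs.2]⟩).le

theorem abs_le_of_abs_history_le (hx : IsSolOn f x) (hf0 : f 0 = 0)
    (hneg : ∀ y, |y| ≤ S → y * f y ≤ 0) (hfS : ∀ y, |y| ≤ S → |f y| < S)
    (hsign : ∀ s ∈ Icc (-1 : ℝ) 0, 0 ≤ x 0 * x s) (h0 : |x 0| ≤ S) (ht : 0 ≤ t)
    (hS : ∀ s ∈ Icc (-1) (t - 1), |x s| ≤ S) : |x t| ≤ S := by
  by_cases hzero : ∃ s ∈ Icc 0 t, x s = 0
  · obtain ⟨a, hat, hxa, hne⟩ := exists_last_zero (hx.continuousOn_Icc le_rfl) hzero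
    exact hx.abs_le_of_last_zero hf0 hneg hfS hat.1 hat.2 hxa hne
      fun s hs => hS s ⟨by linarith [hs.1, hat.1], hs.2⟩
  · push Not at hzero
    have hle : |x t| ≤ |x 0| := hx.abs_le_abs_apply_zero_of_forall_ne_zero hf0
      (fun s hs => hneg _ (hS s hs)) hsign ht hzero
    exact hle.trans h0

theorem abs_le_of_abs_initial_le (hx : IsSolOn f x) (hf0 : f 0 = 0)
    (hneg : ∀ y, |y| ≤ S → y * f y ≤ 0) (hfS : ∀ y, |y| ≤ S → |f y| < S)
    (hsign : ∀ s ∈ Icc (-1 : ℝ) 0, 0 ≤ x 0 * x s) (hS : ∀ s ∈ Icc (-1 : ℝ) 0, |x s| ≤ S)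
    (ht : -1 ≤ t) : |x t| ≤ S := by
  have hbound : ∀ n : ℕ, ∀ s ∈ Icc (-1 : ℝ) n, |x s| ≤ S := by
    intro n
    induction n with
    | zero => simpa only [Nat.cast_zero] using hS
    | succ n ih =>
      intro s hs
      rw [Nat.cast_succ] at hs
      rcases le_total s 0 with hs0 | hs0
      · exact hS s ⟨hs.1, hs0⟩
      · exact hx.abs_le_of_abs_history_le hf0 hneg hfS hsign (hS 0 (by norm_num)) hs0
          fun r hr => ih r ⟨hr.1, by linarith [hr.2, hs.2]⟩
  obtain ⟨n, hn⟩ := exists_nat_ge t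
  exact hbound n t ⟨ht, hn⟩

end IsSolOn

theorem statement_9_general {f x : ℝ → ℝ} {S z : ℝ} (hf0 : f 0 = 0)
    (hneg : ∀ y, |y| ≤ S → y * f y ≤ 0) (hfS : ∀ y, |y| ≤ S → |f y| < S) (hx : IsSolOn f x)
    (hsign : ∀ s ∈ Icc (-1 : ℝ) 0, 0 ≤ x 0 * x s) (hS : ∀ s ∈ Icc (-1 : ℝ) 0, |x s| ≤ S)
    (hz : 0 ≤ z) (hxz : x z = 0) :
    sSup ((fun t => |x t|) '' Icc z (z + 1)) < S := by
  rw [isCompact_Icc.sSup_lt_iff_of_continuous (nonempty_Icc.mpr (by linarith))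
    (hx.continuousOn_Icc hz).abs]
  exact fun t ht => hx.abs_lt_of_apply_eq_zero hfS hz hxz ht
    fun s hs => hx.abs_le_of_abs_initial_le hf0 hneg hfS hsign hS (by linarith [hs.1])

theorem statement_9 (f : ℝ → ℝ) (M : ℝ) (hM : 0 < M)
    (hH : HypH f) (hbd : ∀ y : ℝ, f y ≤ M)
    (ε : ℝ) (hε : 0 < ε)
    (hdiff : ∀ ξ ∈ Icc (-ε) ε, ∃ d : ℝ,
      HasDerivWithinAt f d (Icc (-ε) ε) ξ ∧ |d| < 1)
    (x : ℝ → ℝ) (hx : IsSolOn f x) (hK : MemK M x)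
    (hne : ∃ s ∈ Icc (-1 : ℝ) 0, x s ≠ 0)
    (hsmall : ∀ s ∈ Icc (-1 : ℝ) 0, |x s| ≤ ε)
    (z₁ z₂ : ℝ) (hz₁ : 0 < z₁) (hz₁₂ : z₁ < z₂)
    (hxz₁ : x z₁ = 0) (hxz₂ : x z₂ = 0)
    (hfirst : ∀ t ∈ Ioo 0 z₁, x t ≠ 0) (hsecond : ∀ t ∈ Ioo z₁ z₂, x t ≠ 0) :
    sSup ((fun t => |x t|) '' Icc z₂ (z₂ + 1)) <
      sSup ((fun s => |x s|) '' Icc (-1 : ℝ) 0) := by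
  rw [hK.sSup_abs_eq]
  exact statement_9_general hH.apply_zero (fun y _ => hH.mul_apply_nonpos y)
    (fun _ => abs_apply_lt_of_abs_le hH.apply_zero hdiff (hK.apply_zero_pos hne)
      (le_of_abs_le (hsmall 0 (by norm_num))))
    hx hK.apply_zero_mul_nonneg hK.abs_le_apply_zero (hz₁.trans hz₁₂).le hxz₂
end

section
/- Given reals a, c, δ, γ > 0 satisfying (i) c < min(a, δ), (ii) γ ≥ 4a and γ > δ, (iii) δ + (c/δ)·γ ≤ a, suppose f satisfies (H) and (H''). Then the equation x'(t) = f(x(t-1)) has an SOP solution with minimal period strictly greater than 4, and this minimal period equals z'' - z for some three consecutive zeros z < z' < z'' of the solution (consecutive meaning it has no zeros in (z, z') ∪ (z', z'')). -/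
/-!
The solution is written down explicitly, so no fixed-point argument is needed. It is antiperiodic,
`p (t + τ) = -p t`, with `p = q` on `[0, τ]`, where `q` is a positive bump with `q 0 = q τ = 0` and
`τ > 2`; its minimal period is `2 τ > 4`. Write `b = a / γ` and `d = c / δ`.

* On `[0, 1 - b]` the bump rises with slope `γ`, because one time unit earlier `-p` passes through
  `[a, 2a - c]`. On `[1 - b, 1 + b]` the slope `f (γ (t - 1))` is odd about `t = 1`, so
  `q (1 + b) = γ - a`. A further time `b` costs at most `a`; as `γ ≥ 4a`, this leaves
  `q (1 + 2b) ≥ 2a`.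
* From then on the delayed value lies in `[2a, γ]` and `q` descends with slope `-δ`, until one time
  unit after the moment `s` at which `q` comes down to `2a`. At `s + d` the value is `2a - c`. On
  `[s + 1, s + d + 1]` the slope is between `-γ` and `0`, so
  `q (s + d + 1) ≥ 2a - δ - (c / δ) γ ≥ a`.
* Hence `q` stays in `[a, 2a - c]` on `[s + d, s + d + 1]`, which forces slope `-γ` after
  `s + d + 1`, until `q` vanishes at a time `τ > 2`. The last unit interval before `τ` is exactly
  the history that, after a change of sign, produces the initial rise of `q`.

All this determines the slope as an explicit function of time, so `q` is simply its integral.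
-/

open Set Filter

section MeanValue

variable {q D : ℝ → ℝ} {u v k : ℝ}

lemma mul_sub_le_sub_of_le_hasDerivAt (huv : u ≤ v) (hq : ∀ t ∈ Icc u v, HasDerivAt q (D t) t)
    (hD : ∀ t ∈ Icc u v, k ≤ D t) : k * (v - u) ≤ q v - q u := by
  refine (convex_Icc u v).mul_sub_le_image_sub_of_le_deriv
    (fun t ht ↦ (hq t ht).continuousAt.continuousWithinAt)
    (fun t ht ↦ (hq t (interior_subset ht)).differentiableAt.differentiableWithinAt)
    (fun t ht ↦ ?_) u (left_mem_Icc.2 huv) v (right_mem_Icc.2 huv) huv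
  rw [(hq t (interior_subset ht)).deriv]
  exact hD t (interior_subset ht)

lemma sub_le_mul_sub_of_hasDerivAt_le (huv : u ≤ v) (hq : ∀ t ∈ Icc u v, HasDerivAt q (D t) t)
    (hD : ∀ t ∈ Icc u v, D t ≤ k) : q v - q u ≤ k * (v - u) := by
  have := mul_sub_le_sub_of_le_hasDerivAt huv (fun t ht ↦ (hq t ht).fun_neg)
    fun t ht ↦ neg_le_neg (hD t ht)
  linarith

lemma sub_eq_mul_sub_of_hasDerivAt_eq (huv : u ≤ v) (hq : ∀ t ∈ Icc u v, HasDerivAt q (D t) t)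
    (hD : ∀ t ∈ Icc u v, D t = k) : q v - q u = k * (v - u) :=
  le_antisymm (sub_le_mul_sub_of_hasDerivAt_le huv hq fun t ht ↦ (hD t ht).le)
    (mul_sub_le_sub_of_le_hasDerivAt huv hq fun t ht ↦ (hD t ht).ge)

end MeanValue

lemma intervalIntegral_eq_zero_of_odd {E : Type*} [NormedAddCommGroup E] [NormedSpace ℝ E]
    {g : ℝ → E} (hg : g.Odd) (r : ℝ) : ∫ x in -r..r, g x = 0 := by
  have : IsAddTorsionFree E := .of_isTorsionFree ℝ E
  rw [← self_eq_neg, ← intervalIntegral.integral_neg]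
  simp_rw [← hg.eq]
  rw [intervalIntegral.integral_comp_neg, neg_neg]

section Antiperiodic

section Extension

variable {α β : Type*} [AddCommGroup α] [LinearOrder α] [IsOrderedAddMonoid α] [Archimedean α]
  [AddGroup β] {τ t : α}

/-- The function of antiperiod `τ` which agrees with `q` on the fundamental domain `[0, τ)`. -/
noncomputable def antiperiodicExtension (hτ : 0 < τ) (q : α → β) (t : α) : β :=
  ((toIcoDiv hτ 0 t).negOnePow : ℤ) • q (toIcoMod hτ 0 t)

lemma antiperiodic_antiperiodicExtension (hτ : 0 < τ) (q : α → β) :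
    Function.Antiperiodic (antiperiodicExtension hτ q) τ := fun t ↦ by
  simp only [antiperiodicExtension, toIcoDiv_add_right, toIcoMod_add_right, Int.negOnePow_succ,
    Units.val_neg, neg_zsmul]

lemma antiperiodicExtension_of_mem_Ico (hτ : 0 < τ) (q : α → β) (ht : t ∈ Ico 0 τ) :
    antiperiodicExtension hτ q t = q t := by
  have hdiv : toIcoDiv hτ 0 t = 0 := toIcoDiv_eq_of_sub_zsmul_mem_Ico hτ (by simpa using ht)
  have hmod : toIcoMod hτ 0 t = t := (toIcoMod_eq_self hτ).2 (by simpa using ht)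
  simp [antiperiodicExtension, hdiv, hmod]

lemma exists_zsmul_of_antiperiodic_eq_zero {p : α → β} (hτ : 0 < τ)
    (hp : Function.Antiperiodic p τ) (hne : ∀ t ∈ Ioo 0 τ, p t ≠ 0) (ht : p t = 0) :
    ∃ n : ℤ, t = n • τ := by
  refine ⟨toIcoDiv hτ 0 t, ?_⟩
  have hmod : p (toIcoMod hτ 0 t) = 0 := by
    rw [toIcoMod, hp.sub_zsmul_eq, ht, zsmul_zero]
  have hmem := toIcoMod_mem_Ico' hτ t
  have hzero : toIcoMod hτ 0 t = 0 :=
    hmem.1.antisymm' <| not_lt.1 fun hpos ↦ hne _ ⟨hpos, hmem.2⟩ hmod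
  rwa [toIcoMod, sub_eq_zero] at hzero

end Extension

section Derivative

open scoped Topology

variable {E : Type*} [NormedAddCommGroup E] [NormedSpace ℝ E] {p q : ℝ → E} {q' : E} {τ t : ℝ}

lemma hasDerivAt_add_iff_of_antiperiodic (hp : Function.Antiperiodic p τ) :
    HasDerivAt p (-q') (t + τ) ↔ HasDerivAt p q' t := by
  have hshift : (fun x ↦ p (x + τ)) = fun x ↦ -p x := funext hp
  constructor <;> intro h
  · have hneg : HasDerivAt (fun x ↦ -p x) (-q') t := hshift ▸ h.comp_add_const t τ
    simpa only [neg_neg] using hneg.fun_neg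
  · rw [← add_sub_cancel_right t τ] at h
    simpa only [hp.sub_eq, neg_neg] using (h.comp_sub_const (t + τ) τ).fun_neg

lemma hasDerivAt_antiperiodicExtension (hτ : 0 < τ)
    (hglue : ∀ᶠ x in 𝓝[<] 0, q (x + τ) = -q x) (ht : t ∈ Ico 0 τ) (hq : HasDerivAt q q' t) :
    HasDerivAt (antiperiodicExtension hτ q) q' t := by
  refine hq.congr_of_eventuallyEq ?_
  rcases ht.1.eq_or_lt with rfl | hpos
  · rw [EventuallyEq, ← nhdsLT_sup_nhdsGE, eventually_sup]
    constructor
    · filter_upwards [hglue, Ioo_mem_nhdsLT (neg_lt_zero.2 hτ)] with x hx hmem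
      have hmem' : x + τ ∈ Ico 0 τ := ⟨by linarith [hmem.1], by linarith [hmem.2]⟩
      rw [← neg_inj, ← antiperiodic_antiperiodicExtension hτ q x,
        antiperiodicExtension_of_mem_Ico hτ q hmem', hx]
    · filter_upwards [Ico_mem_nhdsGE hτ] with x hx
      exact antiperiodicExtension_of_mem_Ico hτ q hx
  · filter_upwards [Ioo_mem_nhds hpos ht.2] with x hx
    exact antiperiodicExtension_of_mem_Ico hτ q (Ioo_subset_Ico_self hx)

end Derivative

section DelayEquation

open scoped Topology in
lemma hasDerivAt_delay_antiperiodicExtension {E : Type*} [NormedAddCommGroup E] [NormedSpace ℝ E]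
    {f : E → E} {q : ℝ → E} {τ : ℝ} (hτ : 1 ≤ τ) (hf : f.Odd)
    (hglue : ∀ᶠ x in 𝓝[<] 0, q (x + τ) = -q x)
    (hinit : ∀ t ∈ Ico 0 1, HasDerivAt q (-f (q (t - 1 + τ))) t)
    (hdelay : ∀ t ∈ Ico 1 τ, HasDerivAt q (f (q (t - 1))) t) (t : ℝ) :
    HasDerivAt (antiperiodicExtension (zero_lt_one.trans_le hτ) q)
      (f (antiperiodicExtension (zero_lt_one.trans_le hτ) q (t - 1))) t := by
  have hτ0 := zero_lt_one.trans_le hτ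
  set p := antiperiodicExtension hτ0 q
  have hanti : Function.Antiperiodic p τ := antiperiodic_antiperiodicExtension hτ0 q
  have hpq : ∀ x ∈ Ico 0 τ, p x = q x := fun x ↦ antiperiodicExtension_of_mem_Ico hτ0 q
  have hperiodic : Function.Periodic (fun t ↦ HasDerivAt p (f (p (t - 1))) t) τ := fun t ↦ by
    beta_reduce
    rw [add_sub_right_comm, hanti, hf.eq]
    exact propext (hasDerivAt_add_iff_of_antiperiodic hanti)
  obtain ⟨x, hx, htx⟩ := hperiodic.exists_mem_Ico₀ hτ0 t
  rw [htx]
  refine hasDerivAt_antiperiodicExtension hτ0 hglue hx ?_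
  rcases lt_or_ge x 1 with hx1 | hx1
  · have hmem : x - 1 + τ ∈ Ico 0 τ := ⟨by linarith [hx.1], by linarith⟩
    rw [← neg_neg (p (x - 1)), ← hanti, hf.eq, hpq _ hmem]
    exact hinit x ⟨hx.1, hx1⟩
  · rw [hpq _ ⟨by linarith, by linarith [hx.2]⟩]
    exact hdelay x ⟨hx1, hx.2⟩

lemma minPeriod_two_mul_of_antiperiodic {β : Type*} [AddCommGroup β] [IsAddTorsionFree β]
    {p : ℝ → β} {τ : ℝ} (hτ : 0 < τ) (hp : Function.Antiperiodic p τ)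
    (hp0 : p 0 = 0) (hne : ∀ t ∈ Ioo 0 τ, p t ≠ 0) : MinPeriod p (2 * τ) := by
  refine ⟨by positivity, hp.periodic_two_mul, fun T hT hper ↦ ?_⟩
  have hpT : p T = 0 := by simpa [hp0] using hper 0
  obtain ⟨n, rfl⟩ := exists_zsmul_of_antiperiodic_eq_zero hτ hp hne hpT
  have hn_pos : 0 < n := by
    rw [zsmul_eq_mul] at hT
    exact_mod_cast pos_of_mul_pos_left hT hτ.le
  have hn_ne_one : n ≠ 1 := by
    rintro rfl
    have hhalf := hp (τ / 2)
    rw [← one_zsmul τ, hper, one_zsmul, self_eq_neg] at hhalf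
    exact hne _ ⟨by positivity, by linarith⟩ hhalf
  have hn_two : (2 : ℝ) ≤ n := by exact_mod_cast (by lia : 2 ≤ n)
  rw [zsmul_eq_mul]
  gcongr

lemma isSOP_of_antiperiodic {f p : ℝ → ℝ} {τ : ℝ} (hτ : 1 < τ)
    (hp : Function.Antiperiodic p τ) (hp0 : p 0 = 0) (hne : ∀ t ∈ Ioo 0 τ, p t ≠ 0)
    (hderiv : ∀ t, HasDerivAt p (f (p (t - 1))) t) : IsSOP f p := by
  have hτ0 : 0 < τ := by linarith
  refine ⟨hderiv, ⟨2 * τ, by positivity, hp.periodic_two_mul⟩, ⟨1, 0, ?_⟩,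
    fun z z' hz hz' hzz' ↦ ?_⟩
  · rw [hp0]
    exact hne 1 ⟨one_pos, hτ⟩
  · obtain ⟨m, rfl⟩ := exists_zsmul_of_antiperiodic_eq_zero hτ0 hp hne hz
    obtain ⟨n, rfl⟩ := exists_zsmul_of_antiperiodic_eq_zero hτ0 hp hne hz'
    have hmn : m - n ≠ 0 := sub_ne_zero.2 fun h ↦ hzz' (by rw [h])
    calc 1 < τ := hτ
      _ = 1 * |τ| := by rw [one_mul, abs_of_pos hτ0]
      _ ≤ |((m - n : ℤ) : ℝ)| * |τ| := by gcongr; exact_mod_cast Int.one_le_abs hmn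
      _ = |m • τ - n • τ| := by rw [← abs_mul, ← zsmul_eq_mul, sub_zsmul, ← sub_eq_add_neg]

end DelayEquation

end Antiperiodic

/-- The hypotheses (H'') with (H) weakened to continuity and `x * f x ≤ 0` on `[-2a, 2a]`, together
with names for the time `b = a / γ` in which slope `γ` climbs the height `a` and the time
`d = c / δ` in which slope `-δ` descends by `c`. -/
structure PlateauFeedback (f : ℝ → ℝ) (a b c d δ γ : ℝ) : Prop where
  b_pos : 0 < b
  d_pos : 0 < d
  δ_pos : 0 < δ
  γ_pos : 0 < γ
  γ_mul_b : γ * b = a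
  δ_mul_d : δ * d = c
  four_mul_b_le : 4 * b ≤ 1
  δ_add_le : δ + d * γ ≤ a
  continuous : Continuous f
  odd : f.Odd
  mem_Icc : ∀ x ∈ Icc 0 (2 * a), f x ∈ Icc (-γ) 0
  eq_neg_γ : ∀ x ∈ Icc a (2 * a - c), f x = -γ
  eq_neg_δ : ∀ x ∈ Icc (2 * a) γ, f x = -δ

/-- An explicit stand-in for the bump, to be fed into `f` as the delayed value. Wherever it differs
from the (antiperiodically extended) bump, both lie in a common interval of constancy of `f`: it
rises with slope `γ` through `0` at time `0`, but stays at `-a` before and at `2a` after reaching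
these values; at time `s` it leaves `2a` with slope `-δ`, until it stays at `2a - c`. -/
def profile (a c δ γ s u : ℝ) : ℝ :=
  max (-a) (min (γ * u) (max (2 * a - c) (min (2 * a) (2 * a - δ * (u - s)))))

lemma continuous_profile {a c δ γ s : ℝ} : Continuous (profile a c δ γ s) := by
  unfold profile
  fun_prop

namespace PlateauFeedback

variable {f q : ℝ → ℝ} {a b c d δ γ s u : ℝ}

lemma a_pos (h : PlateauFeedback f a b c d δ γ) : 0 < a :=
  h.γ_mul_b ▸ mul_pos h.γ_pos h.b_pos

lemma c_pos (h : PlateauFeedback f a b c d δ γ) : 0 < c :=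
  h.δ_mul_d ▸ mul_pos h.δ_pos h.d_pos

lemma d_lt_one (h : PlateauFeedback f a b c d δ γ) : d < 1 := by
  have hdb : d * γ < b * γ := by linarith [h.δ_add_le, h.γ_mul_b, h.δ_pos]
  linarith [lt_of_mul_lt_mul_right hdb h.γ_pos.le, h.four_mul_b_le, h.b_pos]

lemma δ_lt (h : PlateauFeedback f a b c d δ γ) : δ < a := by
  linarith [h.δ_add_le, mul_pos h.d_pos h.γ_pos]

lemma c_lt_δ (h : PlateauFeedback f a b c d δ γ) : c < δ :=
  h.δ_mul_d ▸ mul_lt_of_lt_one_right h.δ_pos h.d_lt_one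

lemma two_mul_a_le_γ (h : PlateauFeedback f a b c d δ γ) : 2 * a ≤ γ := by
  nlinarith [h.γ_mul_b, h.γ_pos, h.four_mul_b_le, h.b_pos]

lemma profile_of_le (h : PlateauFeedback f a b c d δ γ) (hu : u ≤ s) :
    profile a c δ γ s u = max (-a) (min (γ * u) (2 * a)) := by
  have hdrop : δ * (u - s) ≤ 0 :=
    mul_nonpos_of_nonneg_of_nonpos h.δ_pos.le (sub_nonpos.2 hu)
  rw [profile, min_eq_left (by linarith : 2 * a ≤ _),
    max_eq_right (by linarith [h.c_pos] : 2 * a - c ≤ 2 * a)]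

lemma profile_of_two_mul_b_le (h : PlateauFeedback f a b c d δ γ) (hu : 2 * b ≤ u) :
    profile a c δ γ s u = max (2 * a - c) (min (2 * a) (2 * a - δ * (u - s))) := by
  have hrise : 2 * a ≤ γ * u := by linarith [mul_le_mul_of_nonneg_left hu h.γ_pos.le, h.γ_mul_b]
  have hc := h.c_pos
  have hca := h.c_lt_δ.trans h.δ_lt
  rw [profile, min_eq_right (max_le (by linarith) (min_le_of_left_le hrise)),
    max_eq_right (le_max_of_le_left (by linarith))]

lemma apply_profile_early (h : PlateauFeedback f a b c d δ γ) (hs : 2 * b ≤ s) (hu : u ≤ -b) :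
    f (profile a c δ γ s u) = γ := by
  have hrise : γ * u ≤ -a := by linarith [mul_le_mul_of_nonneg_left hu h.γ_pos.le, h.γ_mul_b]
  have ha := h.a_pos
  have hca := h.c_lt_δ.trans h.δ_lt
  rw [h.profile_of_le (by linarith [h.b_pos]), min_eq_left (by linarith), max_eq_left hrise,
    h.odd.eq, h.eq_neg_γ a ⟨le_rfl, by linarith⟩, neg_neg]

lemma apply_profile_rise (h : PlateauFeedback f a b c d δ γ) (hs : 2 * b ≤ s)
    (hu : u ∈ Icc (-b) (2 * b)) : f (profile a c δ γ s u) = f (γ * u) := by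
  have hlower := mul_le_mul_of_nonneg_left hu.1 h.γ_pos.le
  have hupper := mul_le_mul_of_nonneg_left hu.2 h.γ_pos.le
  have hb := h.γ_mul_b
  rw [h.profile_of_le (hu.2.trans hs), min_eq_left (by linarith), max_eq_right (by linarith)]

lemma apply_profile_top (h : PlateauFeedback f a b c d δ γ) (hu : u ∈ Icc (2 * b) s) :
    f (profile a c δ γ s u) = -δ := by
  have hdrop : δ * (u - s) ≤ 0 :=
    mul_nonpos_of_nonneg_of_nonpos h.δ_pos.le (sub_nonpos.2 hu.2)
  rw [h.profile_of_two_mul_b_le hu.1, min_eq_left (by linarith),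
    max_eq_right (by linarith [h.c_pos]), h.eq_neg_δ _ ⟨le_rfl, h.two_mul_a_le_γ⟩]

lemma apply_profile_fall (h : PlateauFeedback f a b c d δ γ) (hs : 2 * b ≤ s)
    (hu : u ∈ Icc s (s + d)) : f (profile a c δ γ s u) = f (2 * a - δ * (u - s)) := by
  have hdrop : 0 ≤ δ * (u - s) := mul_nonneg h.δ_pos.le (sub_nonneg.2 hu.1)
  have hdrop' : δ * (u - s) ≤ c := by
    linarith [mul_le_mul_of_nonneg_left hu.2 h.δ_pos.le, h.δ_mul_d]
  rw [h.profile_of_two_mul_b_le (hs.trans hu.1), min_eq_right (by linarith),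
    max_eq_right (by linarith)]

lemma apply_profile_late (h : PlateauFeedback f a b c d δ γ) (hs : 2 * b ≤ s) (hu : s + d ≤ u) :
    f (profile a c δ γ s u) = -γ := by
  have hdrop : c ≤ δ * (u - s) := by
    linarith [mul_le_mul_of_nonneg_left hu h.δ_pos.le, h.δ_mul_d]
  have hc := h.c_pos
  have hca := h.c_lt_δ.trans h.δ_lt
  rw [h.profile_of_two_mul_b_le (by linarith [h.d_pos]), min_eq_right (by linarith),
    max_eq_left (by linarith), h.eq_neg_γ _ ⟨by linarith, le_rfl⟩]

lemma apply_profile_mem_Icc_of_nonpos (h : PlateauFeedback f a b c d δ γ) (hs : 0 ≤ s)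
    (hu : u ≤ 0) : f (profile a c δ γ s u) ∈ Icc 0 γ := by
  have hrise : γ * u ≤ 0 := mul_nonpos_of_nonneg_of_nonpos h.γ_pos.le hu
  have ha := h.a_pos
  have hmem : -profile a c δ γ s u ∈ Icc 0 (2 * a) := by
    rw [h.profile_of_le (hu.trans hs), min_eq_left (by linarith)]
    constructor
    · linarith [max_le (neg_nonpos.2 ha.le) hrise]
    · linarith [le_max_left (-a) (γ * u)]
  have hf := h.mem_Icc _ hmem
  rw [h.odd.eq] at hf
  exact ⟨by linarith [hf.2], by linarith [hf.1]⟩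

lemma apply_profile_mem_Icc_of_nonneg (h : PlateauFeedback f a b c d δ γ) (hu : 0 ≤ u) :
    f (profile a c δ γ s u) ∈ Icc (-γ) 0 := by
  have hc := h.c_pos
  have hca := h.c_lt_δ.trans h.δ_lt
  refine h.mem_Icc _ ⟨le_max_of_le_right (le_min (mul_nonneg h.γ_pos.le hu)
    (le_max_of_le_left (by linarith))), max_le (by linarith) (min_le_of_right_le
    (max_le (by linarith) (min_le_left _ _)))⟩

lemma map_one_add_two_mul_b (h : PlateauFeedback f a b c d δ γ) (hs : 2 * b ≤ s)
    (hq : ∀ t, HasDerivAt q (f (profile a c δ γ s (t - 1))) t) (hq0 : q 0 = 0) :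
    q (1 + 2 * b) = γ - a + ∫ u in b..2 * b, f (γ * u) := by
  have hb := h.b_pos
  have hf := h.continuous
  have hrise : q (1 - b) - q 0 = γ * (1 - b - 0) :=
    sub_eq_mul_sub_of_hasDerivAt_eq (by linarith [h.four_mul_b_le]) (fun t _ ↦ hq t)
      fun t ht ↦ h.apply_profile_early hs (by linarith [ht.2])
  have hcont : Continuous fun t ↦ f (profile a c δ γ s (t - 1)) := by
    have := continuous_profile (a := a) (c := c) (δ := δ) (γ := γ) (s := s)
    fun_prop
  have hodd : ∫ u in -b..b, f (γ * u) = 0 :=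
    intervalIntegral_eq_zero_of_odd (fun u ↦ by rw [mul_neg, h.odd.eq]) b
  have hturn : q (1 + 2 * b) - q (1 - b) = ∫ u in b..2 * b, f (γ * u) := calc
    _ = ∫ t in 1 - b..1 + 2 * b, f (profile a c δ γ s (t - 1)) :=
      (intervalIntegral.integral_eq_sub_of_hasDerivAt (fun t _ ↦ hq t)
        (hcont.intervalIntegrable _ _)).symm
    _ = ∫ u in -b..2 * b, f (profile a c δ γ s u) := by
      rw [intervalIntegral.integral_comp_sub_right (fun u ↦ f (profile a c δ γ s u))]
      congr 1 <;> ring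
    _ = ∫ u in -b..2 * b, f (γ * u) := intervalIntegral.integral_congr fun u hu ↦
      h.apply_profile_rise hs (by rwa [uIcc_of_le (by linarith)] at hu)
    _ = (∫ u in -b..b, f (γ * u)) + ∫ u in b..2 * b, f (γ * u) :=
      (intervalIntegral.integral_add_adjacent_intervals
        (Continuous.intervalIntegrable (by fun_prop) _ _)
        (Continuous.intervalIntegrable (by fun_prop) _ _)).symm
    _ = ∫ u in b..2 * b, f (γ * u) := by rw [hodd, zero_add]
  linarith [h.γ_mul_b]

lemma neg_a_le_integral (h : PlateauFeedback f a b c d δ γ) :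
    -a ≤ ∫ u in b..2 * b, f (γ * u) := by
  have hb := h.b_pos
  have hγ := h.γ_pos
  have hf := h.continuous
  calc -a = ∫ _ in b..2 * b, -γ := by
        rw [intervalIntegral.integral_const, smul_eq_mul]
        linarith [h.γ_mul_b]
    _ ≤ ∫ u in b..2 * b, f (γ * u) :=
      intervalIntegral.integral_mono_on (by linarith) (by simp)
        (Continuous.intervalIntegrable (by fun_prop) _ _) fun u hu ↦
        (h.mem_Icc _ ⟨mul_nonneg hγ.le (by linarith [hu.1]), by
          linarith [mul_le_mul_of_nonneg_left hu.2 hγ.le, h.γ_mul_b]⟩).1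

end PlateauFeedback

/-- The positive hump of the periodic solution between its zeros `0` and `τ`: the function `q`
descends through `2a` at time `s` and, after time `s + d + 1`, falls with slope `-γ` to its zero
`τ`. Outside `[-b, τ]` it bears no relation to the solution. -/
structure IsBump (f : ℝ → ℝ) (a b c d δ γ s τ : ℝ) (q : ℝ → ℝ) : Prop
    extends PlateauFeedback f a b c d δ γ where
  hasDerivAt : ∀ t, HasDerivAt q (f (profile a c δ γ s (t - 1))) t
  map_zero : q 0 = 0
  le_s : 1 + 2 * b ≤ s
  map_s : q s = 2 * a
  map_s_add : q (s + d + 1) = γ * (τ - (s + d + 1))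

lemma PlateauFeedback.exists_isBump {f : ℝ → ℝ} {a b c d δ γ : ℝ}
    (h : PlateauFeedback f a b c d δ γ) : ∃ s τ q, IsBump f a b c d δ γ s τ q := by
  have hδ := h.δ_pos
  have hγ := h.γ_pos
  obtain ⟨height, hheight⟩ : ∃ y, y = γ - a + ∫ u in b..2 * b, f (γ * u) := ⟨_, rfl⟩
  have hheight_ge : 2 * a ≤ height := by
    linarith [h.neg_a_le_integral, h.γ_mul_b, mul_le_mul_of_nonneg_left h.four_mul_b_le hγ.le]
  obtain ⟨s, hs⟩ : ∃ s, δ * (s - (1 + 2 * b)) = height - 2 * a :=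
    ⟨1 + 2 * b + (height - 2 * a) / δ, by field_simp; ring⟩
  have hs_ge : 1 + 2 * b ≤ s :=
    sub_nonneg.1 (nonneg_of_mul_nonneg_right (by linarith) hδ)
  have hcont : Continuous fun t ↦ f (profile a c δ γ s (t - 1)) :=
    h.continuous.comp (continuous_profile.comp (continuous_sub_right 1))
  obtain ⟨q, hq0, hq⟩ :
      ∃ q : ℝ → ℝ, q 0 = 0 ∧ ∀ t, HasDerivAt q (f (profile a c δ γ s (t - 1))) t :=
    ⟨fun t ↦ ∫ x in 0..t, f (profile a c δ γ s (x - 1)), intervalIntegral.integral_same,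
      fun t ↦ (hcont.integral_hasStrictDerivAt 0 t).hasDerivAt⟩
  have hdescent : q s - q (1 + 2 * b) = -δ * (s - (1 + 2 * b)) :=
    sub_eq_mul_sub_of_hasDerivAt_eq hs_ge (fun t _ ↦ hq t)
      fun t ht ↦ h.apply_profile_top ⟨by linarith [ht.1], by linarith [ht.2]⟩
  have hq_height : q (1 + 2 * b) = height := hheight ▸ h.map_one_add_two_mul_b (by linarith) hq hq0
  exact ⟨s, s + d + 1 + q (s + d + 1) / γ, q,
    { toPlateauFeedback := h, hasDerivAt := hq, map_zero := hq0, le_s := hs_ge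
      map_s := by linarith
      map_s_add := by field_simp; ring }⟩

namespace IsBump

variable {f q : ℝ → ℝ} {a b c d δ γ s τ t : ℝ}

lemma map_of_le (h : IsBump f a b c d δ γ s τ q) (ht : t ≤ 1 - b) : q t = γ * t := by
  have hslope : ∀ r ≤ 1 - b, f (profile a c δ γ s (r - 1)) = γ := fun r hr ↦
    h.apply_profile_early (by linarith [h.le_s]) (by linarith)
  rcases le_total t 0 with ht0 | ht0
  · have := sub_eq_mul_sub_of_hasDerivAt_eq ht0 (fun r _ ↦ h.hasDerivAt r)
      fun r hr ↦ hslope r (by linarith [hr.2, h.four_mul_b_le])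
    linarith [h.map_zero]
  · have := sub_eq_mul_sub_of_hasDerivAt_eq ht0 (fun r _ ↦ h.hasDerivAt r)
      fun r hr ↦ hslope r (hr.2.trans ht)
    linarith [h.map_zero]

lemma monotoneOn (h : IsBump f a b c d δ γ s τ q) : MonotoneOn q (Iic 1) := by
  intro u _ v hv huv
  have hs : 0 ≤ s := by linarith [h.le_s, h.b_pos]
  have := mul_sub_le_sub_of_le_hasDerivAt huv (fun r _ ↦ h.hasDerivAt r) fun r hr ↦
    (h.apply_profile_mem_Icc_of_nonpos hs (sub_nonpos.2 (hr.2.trans hv))).1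
  linarith

lemma antitoneOn (h : IsBump f a b c d δ γ s τ q) : AntitoneOn q (Ici 1) := by
  intro u hu v _ huv
  have := sub_le_mul_sub_of_hasDerivAt_le huv (fun r _ ↦ h.hasDerivAt r) fun r hr ↦
    (h.apply_profile_mem_Icc_of_nonneg (sub_nonneg.2 (le_trans hu hr.1))).2
  linarith

lemma map_one_le (h : IsBump f a b c d δ γ s τ q) : q 1 ≤ γ := by
  have hs : 0 ≤ s := by linarith [h.le_s, h.b_pos]
  have := sub_le_mul_sub_of_hasDerivAt_le zero_le_one (fun r _ ↦ h.hasDerivAt r) fun r hr ↦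
    (h.apply_profile_mem_Icc_of_nonpos hs (sub_nonpos.2 hr.2)).2
  linarith [h.map_zero]

lemma map_of_mem_Icc (h : IsBump f a b c d δ γ s τ q) (ht : t ∈ Icc (1 + 2 * b) (s + 1)) :
    q t = 2 * a - δ * (t - s) := by
  have hslope : ∀ r ∈ Icc (1 + 2 * b) (s + 1), f (profile a c δ γ s (r - 1)) = -δ := fun r hr ↦
    h.apply_profile_top ⟨by linarith [hr.1], by linarith [hr.2]⟩
  have hmap_s := h.map_s
  rcases le_total t s with hts | hts
  · have := sub_eq_mul_sub_of_hasDerivAt_eq hts (fun r _ ↦ h.hasDerivAt r)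
      fun r hr ↦ hslope r ⟨ht.1.trans hr.1, by linarith [hr.2]⟩
    linarith
  · have := sub_eq_mul_sub_of_hasDerivAt_eq hts (fun r _ ↦ h.hasDerivAt r)
      fun r hr ↦ hslope r ⟨h.le_s.trans hr.1, hr.2.trans ht.2⟩
    linarith

lemma map_of_ge (h : IsBump f a b c d δ γ s τ q) (ht : s + d + 1 ≤ t) : q t = γ * (τ - t) := by
  have hs : 2 * b ≤ s := by linarith [h.le_s]
  have := sub_eq_mul_sub_of_hasDerivAt_eq ht (fun r _ ↦ h.hasDerivAt r)
    fun r hr ↦ h.apply_profile_late hs (by linarith [hr.1])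
  linarith [h.map_s_add]

lemma map_mem_Icc_slow (h : IsBump f a b c d δ γ s τ q) (ht : t ∈ Icc (2 * b) s) :
    q t ∈ Icc (2 * a) γ := by
  have hb := h.b_pos
  have hb4 := h.four_mul_b_le
  rcases le_total t 1 with ht1 | ht1
  · have hstart : q (2 * b) = 2 * a := by
      rw [h.map_of_le (by linarith), mul_left_comm, h.γ_mul_b]
    exact ⟨hstart ▸ h.monotoneOn (ht.1.trans ht1) ht1 ht.1,
      (h.monotoneOn ht1 self_mem_Iic ht1).trans h.map_one_le⟩
  · exact ⟨h.map_s ▸ h.antitoneOn ht1 (ht1.trans ht.2) ht.2,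
      (h.antitoneOn self_mem_Ici ht1 ht1).trans h.map_one_le⟩

lemma le_map_s_add (h : IsBump f a b c d δ γ s τ q) : a ≤ q (s + d + 1) := by
  have hd := h.d_pos
  have hs := h.le_s
  have hb := h.b_pos
  have hs1 := h.map_of_mem_Icc (t := s + 1) ⟨by linarith, le_rfl⟩
  have hfall : -γ * (s + d + 1 - (s + 1)) ≤ q (s + d + 1) - q (s + 1) :=
    mul_sub_le_sub_of_le_hasDerivAt (by linarith) (fun r _ ↦ h.hasDerivAt r) fun r hr ↦
      (h.apply_profile_mem_Icc_of_nonneg (by linarith [hr.1])).1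
  linarith [h.δ_add_le]

lemma map_mem_Icc_fast (h : IsBump f a b c d δ γ s τ q) (ht : t ∈ Icc (s + d) (s + d + 1)) :
    q t ∈ Icc a (2 * a - c) := by
  have hd := h.d_pos
  have hs := h.le_s
  have hb := h.b_pos
  have hstart : q (s + d) = 2 * a - c := by
    rw [h.map_of_mem_Icc ⟨by linarith, by linarith [h.d_lt_one]⟩, add_sub_cancel_left, h.δ_mul_d]
  have ht1 : 1 ≤ t := by linarith [ht.1]
  exact ⟨h.le_map_s_add.trans (h.antitoneOn ht1 (ht1.trans ht.2) ht.2),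
    hstart ▸ h.antitoneOn (by rw [mem_Ici]; linarith) ht1 ht.1⟩

lemma tau_sub_mem_Icc (h : IsBump f a b c d δ γ s τ q) : τ - (s + d + 1) ∈ Icc b (2 * b) := by
  have hend := h.map_s_add
  have hmem := h.map_mem_Icc_fast (t := s + d + 1) ⟨by linarith, le_rfl⟩
  constructor <;> refine le_of_mul_le_mul_left ?_ h.γ_pos
  · rw [h.γ_mul_b, ← hend]
    exact hmem.1
  · rw [mul_left_comm, h.γ_mul_b, ← hend]
    linarith [hmem.2, h.c_pos]

lemma two_lt_tau (h : IsBump f a b c d δ γ s τ q) : 2 < τ := by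
  linarith [h.tau_sub_mem_Icc.1, h.le_s, h.d_pos, h.b_pos]

lemma map_pos (h : IsBump f a b c d δ γ s τ q) (ht : t ∈ Ioo 0 τ) : 0 < q t := by
  have ha := h.a_pos
  have hb := h.b_pos
  have hs := h.le_s
  have hγ := h.γ_pos
  rcases le_total t (1 - b) with ht1 | ht1
  · rw [h.map_of_le ht1]
    exact mul_pos hγ ht.1
  rcases le_total t s with ht2 | ht2
  · linarith [(h.map_mem_Icc_slow ⟨by linarith [h.four_mul_b_le], ht2⟩).1]
  rcases le_total t (s + d + 1) with ht3 | ht3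
  · have ht1 : 1 ≤ t := by linarith
    exact ha.trans_le (h.le_map_s_add.trans (h.antitoneOn ht1 (ht1.trans ht3) ht3))
  · rw [h.map_of_ge ht3]
    exact mul_pos hγ (sub_pos.2 ht.2)

open scoped Topology in
lemma eventually_map_add_tau (h : IsBump f a b c d δ γ s τ q) :
    ∀ᶠ x in 𝓝[<] 0, q (x + τ) = -q x := by
  filter_upwards [Ioo_mem_nhdsLT (neg_lt_zero.2 h.b_pos)] with x hx
  rw [h.map_of_ge (by linarith [h.tau_sub_mem_Icc.1, hx.1]),
    h.map_of_le (by linarith [hx.2, h.four_mul_b_le, h.b_pos])]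
  ring

lemma hasDerivAt_delay (h : IsBump f a b c d δ γ s τ q) (ht : t ∈ Ico 1 τ) :
    HasDerivAt q (f (q (t - 1))) t := by
  have hb := h.b_pos
  have hs : 2 * b ≤ s := by linarith [h.le_s]
  suffices hprofile : f (profile a c δ γ s (t - 1)) = f (q (t - 1)) from hprofile ▸ h.hasDerivAt t
  rcases le_total (t - 1) (2 * b) with ht1 | ht1
  · rw [h.apply_profile_rise hs ⟨by linarith [ht.1], ht1⟩,
      h.map_of_le (by linarith [h.four_mul_b_le])]
  rcases le_total (t - 1) s with ht2 | ht2
  · rw [h.apply_profile_top ⟨ht1, ht2⟩, h.eq_neg_δ _ (h.map_mem_Icc_slow ⟨ht1, ht2⟩)]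
  rcases le_total (t - 1) (s + d) with ht3 | ht3
  · rw [h.apply_profile_fall hs ⟨ht2, ht3⟩,
      h.map_of_mem_Icc ⟨by linarith [h.le_s], by linarith [h.d_lt_one]⟩]
  · have hfast := h.map_mem_Icc_fast
      ⟨ht3, by linarith [ht.2, h.tau_sub_mem_Icc.2, h.four_mul_b_le]⟩
    rw [h.apply_profile_late hs ht3, h.eq_neg_γ _ hfast]

lemma hasDerivAt_history (h : IsBump f a b c d δ γ s τ q) (ht : t ∈ Ico 0 1) :
    HasDerivAt q (-f (q (t - 1 + τ))) t := by
  have hb := h.b_pos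
  have hτ := h.tau_sub_mem_Icc
  have hs : 2 * b ≤ s := by linarith [h.le_s]
  suffices hprofile : f (profile a c δ γ s (t - 1)) = -f (q (t - 1 + τ)) from
    hprofile ▸ h.hasDerivAt t
  rcases le_total t (1 - b) with ht1 | ht1
  · have hfast : q (t - 1 + τ) ∈ Icc a (2 * a - c) := by
      have hmem := h.map_mem_Icc_fast (t := s + d + 1) ⟨by linarith, le_rfl⟩
      rcases le_total (t - 1 + τ) (s + d + 1) with hle | hle
      · exact h.map_mem_Icc_fast ⟨by linarith [ht.1, hτ.1], hle⟩
      · have hd := h.d_pos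
        have hge : γ * b ≤ q (t - 1 + τ) := by
          rw [h.map_of_ge hle]
          exact mul_le_mul_of_nonneg_left (by linarith) h.γ_pos.le
        have h1 : 1 ≤ s + d + 1 := by linarith
        exact ⟨h.γ_mul_b ▸ hge, (h.antitoneOn h1 (h1.trans hle) hle).trans hmem.2⟩
    rw [h.apply_profile_early hs (by linarith), h.eq_neg_γ _ hfast, neg_neg]
  · rw [h.apply_profile_rise hs ⟨by linarith, by linarith [ht.2]⟩,
      h.map_of_ge (by linarith [hτ.1]), ← h.odd.eq]
    congr 1
    ring

end IsBump

lemma PlateauFeedback.exists_antiperiodic_hasDerivAt {f : ℝ → ℝ} {a b c d δ γ : ℝ}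
    (h : PlateauFeedback f a b c d δ γ) :
    ∃ (τ : ℝ) (p : ℝ → ℝ), 2 < τ ∧ Function.Antiperiodic p τ ∧ p 0 = 0 ∧
      (∀ t ∈ Ioo 0 τ, 0 < p t) ∧ ∀ t, HasDerivAt p (f (p (t - 1))) t := by
  obtain ⟨s, τ, q, hq⟩ := h.exists_isBump
  have hτ : 2 < τ := hq.two_lt_tau
  have hτ0 : 0 < τ := by linarith
  have hpq : ∀ t ∈ Ico 0 τ, antiperiodicExtension hτ0 q t = q t := fun t ↦
    antiperiodicExtension_of_mem_Ico hτ0 q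
  exact ⟨τ, antiperiodicExtension hτ0 q, hτ, antiperiodic_antiperiodicExtension hτ0 q,
    (hpq 0 ⟨le_rfl, hτ0⟩).trans hq.map_zero,
    fun t ht ↦ (hq.map_pos ht).trans_eq (hpq t (Ioo_subset_Ico_self ht)).symm,
    hasDerivAt_delay_antiperiodicExtension (by linarith) h.odd hq.eventually_map_add_tau
      (fun t ↦ hq.hasDerivAt_history) fun t ↦ hq.hasDerivAt_delay⟩

lemma HypH''.plateauFeedback {f : ℝ → ℝ} {a c δ γ : ℝ} (hf : HypH'' f a c δ γ) (ha : 0 < a)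
    (hc : 0 < c) (hδ : 0 < δ) (hγ : 4 * a ≤ γ) (hδ_add : δ + (c / δ) * γ ≤ a)
    (hcont : Continuous f) (hneg : ∀ x ∈ Icc 0 (2 * a), f x ≤ 0) :
    PlateauFeedback f a (a / γ) c (c / δ) δ γ where
  b_pos := div_pos ha (by linarith)
  d_pos := div_pos hc hδ
  δ_pos := hδ
  γ_pos := by linarith
  γ_mul_b := mul_div_cancel₀ a (by linarith)
  δ_mul_d := mul_div_cancel₀ c hδ.ne'
  four_mul_b_le := by rwa [← mul_div_assoc, div_le_one (by linarith)]
  δ_add_le := hδ_add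
  continuous := hcont
  odd := hf.1
  mem_Icc x hx := ⟨(abs_le.1 (hf.2.1 x hx)).1, hneg x hx⟩
  eq_neg_γ := hf.2.2.1
  eq_neg_δ := hf.2.2.2

lemma apply_nonpos_of_mul_apply_neg {f : ℝ → ℝ} (hodd : f.Odd) (hf : ∀ x ≠ 0, x * f x < 0)
    {x : ℝ} (hx : 0 ≤ x) : f x ≤ 0 := by
  rcases hx.eq_or_lt with rfl | hpos
  · exact hodd.map_zero.le
  · exact (neg_of_mul_neg_right (hf x hpos.ne') hpos.le).le

theorem statement_10_general (f : ℝ → ℝ) (a c δ γ : ℝ)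
    (ha : 0 < a) (hc : 0 < c) (hδ : 0 < δ) (hγ : 4 * a ≤ γ) (hδ_add : δ + (c / δ) * γ ≤ a)
    (hcont : Continuous f) (hneg : ∀ x ∈ Icc 0 (2 * a), f x ≤ 0) (hH'' : HypH'' f a c δ γ) :
    ∃ (p : ℝ → ℝ) (z z' z'' : ℝ), IsSOP f p ∧
      z < z' ∧ z' < z'' ∧ p z = 0 ∧ p z' = 0 ∧ p z'' = 0 ∧
      (∀ t, t ∈ Ioo z z' ∪ Ioo z' z'' → p t ≠ 0) ∧
      MinPeriod p (z'' - z) ∧ 4 < z'' - z := by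
  obtain ⟨τ, p, hτ, hp, hp0, hpos, hderiv⟩ :=
    (hH''.plateauFeedback ha hc hδ hγ hδ_add hcont hneg).exists_antiperiodic_hasDerivAt
  have hτ0 : 0 < τ := by linarith
  have hne : ∀ t ∈ Ioo 0 τ, p t ≠ 0 := fun t ht ↦ (hpos t ht).ne'
  refine ⟨p, 0, τ, 2 * τ, isSOP_of_antiperiodic (by linarith) hp hp0 hne hderiv, hτ0, by linarith,
    hp0, by rw [hp.eq, hp0, neg_zero], by rw [hp.periodic_two_mul.eq, hp0], ?_, ?_, by linarith⟩
  · rintro t (ht | ht)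
    · exact hne t ht
    · rw [← neg_ne_zero, ← hp.sub_eq]
      exact hne (t - τ) ⟨by linarith [ht.1], by linarith [ht.2]⟩
  · rw [sub_zero]
    exact minPeriod_two_mul_of_antiperiodic hτ0 hp hp0 hne

theorem statement_10 (f : ℝ → ℝ) (a c δ γ : ℝ)
    (ha : 0 < a) (hc : 0 < c) (hδ : 0 < δ) (hγ : 0 < γ)
    (hi : c < min a δ) (hii : 4 * a ≤ γ ∧ δ < γ) (hiii : δ + (c / δ) * γ ≤ a)
    (hH : HypH f) (hH'' : HypH'' f a c δ γ) :
    ∃ (p : ℝ → ℝ) (z z' z'' : ℝ), IsSOP f p ∧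
      z < z' ∧ z' < z'' ∧ p z = 0 ∧ p z' = 0 ∧ p z'' = 0 ∧
      (∀ t, t ∈ Ioo z z' ∪ Ioo z' z'' → p t ≠ 0) ∧
      MinPeriod p (z'' - z) ∧ 4 < z'' - z := by
  exact statement_10_general f a c δ γ ha hc hδ hii.1 hiii hH.1
    (fun _ hx ↦ apply_nonpos_of_mul_apply_neg hH''.1 hH.2.1 hx.1) hH''
end
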